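/- arXiv:2511.12172 — 2 statements merged into one kernel-verified Lean document; each statement's English description precedes it below -/
import Mathlib

section
/- There exists a map f from the unit sphere S⁷ = Metric.sphere 0 1 in EuclideanSpace ℝ (Fin 8) to EuclideanSpace ℝ (Fin 11) such that: (i) f is infinitely differentiable as a map of smooth manifolds (ContMDiff with respect to the standard smooth structure on the sphere modeled on EuclideanSpace ℝ (Fin 7) and the standard structure on EuclideanSpace ℝ (Fin 11)); (ii) f(−x) = f(x) for every x ∈ S⁷, where −x denotes the antipodal point; (iii) whenever f(x) = f(y) for x, y ∈ S⁷, one has x = y or x = −y; and (iv) for every x ∈ S⁷ the differential (mfderiv) of f at x is an injective linear map on the tangent space of S⁷ at x. (Such an f witnesses a smooth embedding of real projective 7-space ℝP⁷ = S⁷/{±1} into ℝ¹¹, which is the paper's main theorem.) -/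
open Metric Manifold

instance : Fact (Module.finrank ℝ (EuclideanSpace ℝ (Fin 8)) = 7 + 1) :=
  ⟨by simp [finrank_euclideanSpace_fin]⟩

section Construction
open scoped Quaternion

abbrev Hq := Quaternion ℝ
abbrev E6 := EuclideanSpace ℝ (Fin 6)

lemma hq_ext {a b : Hq} (h0 : a.re = b.re) (h1 : a.imI = b.imI) (h2 : a.imJ = b.imJ)
    (h3 : a.imK = b.imK) : a = b := Quaternion.ext _ _ h0 h1 h2 h3

noncomputable def mk4 (a b c d : ℝ) : Hq := ⟨a, b, c, d⟩

@[simp] lemma mk4_re (a b c d : ℝ) : (mk4 a b c d).re = a := rfl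
@[simp] lemma mk4_imI (a b c d : ℝ) : (mk4 a b c d).imI = b := rfl
@[simp] lemma mk4_imJ (a b c d : ℝ) : (mk4 a b c d).imJ = c := rfl
@[simp] lemma mk4_imK (a b c d : ℝ) : (mk4 a b c d).imK = d := rfl

noncomputable def cc (t : ℝ) (a : Hq) : Hq :=
  mk4 (a.re ^ 2 - a.imI ^ 2 - (1 - t) * (a.imJ ^ 2 + a.imK ^ 2)) (2 * a.re * a.imI)
    (2 * (1 - t) * a.re * a.imJ - t * a.imK) (2 * (1 - t) * a.re * a.imK + t * a.imJ)

lemma cc_zero (a : Hq) : cc 0 a = a * a := by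
  apply hq_ext <;> simp [cc] <;> ring

lemma cc_ne_zero {t : ℝ} (a : Hq) (ha : a ≠ 0) : cc t a ≠ 0 := by
  intro h
  apply ha
  have h0 := congrArg (fun q : Hq => q.re) h
  have h1 := congrArg (fun q : Hq => q.imI) h
  have h2 := congrArg (fun q : Hq => q.imJ) h
  have h3 := congrArg (fun q : Hq => q.imK) h
  simp only [cc, mk4_re, mk4_imI, mk4_imJ, mk4_imK, Quaternion.re_zero, Quaternion.imI_zero, Quaternion.imJ_zero,
    Quaternion.imK_zero] at h0 h1 h2 h3
  have hm : (4 * (1 - t) ^ 2 * a.re ^ 2 + t ^ 2) * (a.imJ ^ 2 + a.imK ^ 2) = 0 := by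
    linear_combination (2 * (1 - t) * a.re * a.imJ - t * a.imK) * h2 +
      (2 * (1 - t) * a.re * a.imK + t * a.imJ) * h3
  have key : a.re = 0 ∧ a.imI = 0 ∧ a.imJ = 0 ∧ a.imK = 0 := by
    rcases mul_eq_zero.1 hm with hm | hm
    · have ht : t = 0 := by nlinarith [sq_nonneg ((1 - t) * a.re), sq_nonneg t]
      subst ht
      have hr : a.re = 0 := by nlinarith [sq_nonneg a.re]
      refine ⟨hr, ?_, ?_, ?_⟩ <;> rw [hr] at h0 <;>
        nlinarith [sq_nonneg a.imI, sq_nonneg a.imJ, sq_nonneg a.imK]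
    · have hJ : a.imJ = 0 := by nlinarith [sq_nonneg a.imJ, sq_nonneg a.imK]
      have hK : a.imK = 0 := by nlinarith [sq_nonneg a.imJ, sq_nonneg a.imK]
      rw [hJ, hK] at h0
      have : a.re ^ 2 = a.imI ^ 2 := by linarith
      have h4 : (a.re ^ 2 + a.imI ^ 2) ^ 2 = 0 := by
        linear_combination (a.re ^ 2 - a.imI ^ 2) * this + 2 * a.re * a.imI * h1
      have h5 : a.re ^ 2 + a.imI ^ 2 = 0 := by simpa using h4
      refine ⟨?_, ?_, hJ, hK⟩ <;> nlinarith [sq_nonneg a.re, sq_nonneg a.imI]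
  apply hq_ext <;> simp [key]

/-- The (unnormalised) conformal embedding of `Im ℍ` in `ℝ⁶`. -/
noncomputable def tauRaw (σ : ℝ) (c v : Hq) : E6 :=
  !₂[σ * v.imI, σ * v.imJ, σ * v.imK, (1 - σ) * (c * v * star c).imI,
    (1 - σ) * (c * v * star c).imJ, (1 - σ) * (c * v * star c).imK]

noncomputable def gg (κ : ℝ) (a u : Hq) : Hq :=
  mk4 a.re a.imI κ 0 * mk4 (-2 * u.imI * a.imJ) (-2 * u.imI * a.imK) (-u.imJ) (-u.imK) *
    mk4 a.re a.imI κ 0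

noncomputable def rr (κ : ℝ) (a u : Hq) : ℝ :=
  -u.imI * ((a.re ^ 2 + a.imI ^ 2) ^ 2 - (a.imJ ^ 2 + a.imK ^ 2)) - 1 / 100 - 2 / 100 * κ * u.imI

noncomputable def ee (t₁ σ t κ : ℝ) (a u : Hq) : E6 :=
  !₂[-σ * u.imI, t * (gg κ a u).imJ, t * (gg κ a u).imK,
    -(1 - t) * (cc t₁ a * u * star (cc t₁ a)).imI + t * rr κ a u,
    -(1 - t) * (cc t₁ a * u * star (cc t₁ a)).imJ + t * (gg κ a u).re,
    -(1 - t) * (cc t₁ a * u * star (cc t₁ a)).imK + t * (gg κ a u).imI]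

def Regime (t₁ σ t κ : ℝ) (a : Hq) : Prop :=
  (σ = 0 ∧ t = 0 ∧ a ≠ 0) ∨ (t = 0 ∧ 0 < σ ∧ σ ≤ 1 ∧ a ≠ 0) ∨
  (t₁ = 1 ∧ σ = 1 ∧ κ = 0 ∧ 0 ≤ t ∧ t ≤ 1 ∧ 1 / 100 < (Quaternion.normSq a) ^ 2) ∨
  (σ = 1 ∧ t = 1 ∧ 0 ≤ κ ∧ κ ≤ 1 ∧ (κ = 1 ∨ 1 / 100 < (Quaternion.normSq a) ^ 2))

def BadE (σ t₁ t κ : ℝ) (a u : Hq) : Prop := 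
  (∃ l : ℝ, 0 ≤ l ∧ ee t₁ σ t κ a u = l • EuclideanSpace.single 0 1) ∨
  (∃ l : ℝ, 0 ≤ l ∧ ee t₁ σ t κ a u = l • tauRaw σ (cc t₁ a) u)

lemma conj_im (c u : Hq) (hu : u.re = 0) : (c * u * star c).re = 0 := by
  simp [hu]; ring

lemma conj_ne {c u : Hq} (hc : c ≠ 0) (hu : u ≠ 0) (hr : u.re = 0) :
    ¬ ((c * u * star c).imI = 0 ∧ (c * u * star c).imJ = 0 ∧ (c * u * star c).imK = 0) := by
  rintro ⟨h1, h2, h3⟩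
  have : c * u * star c = 0 := by
    exact hq_ext (conj_im c u hr) h1 h2 h3
  simp [hc, hu] at this

lemma V_gg (κ : ℝ) (a u : Hq) (hκ0 : 0 ≤ κ) (hκ1 : κ ≤ 1) (hr : u.re = 0)
    (hn : u.imI ^ 2 + u.imJ ^ 2 + u.imK ^ 2 = 1)
    (hk : κ = 1 ∨ 1 / 100 < (Quaternion.normSq a) ^ 2) (hu1 : u.imI ≤ 0)
    (h0 : (gg κ a u).re = 0) (h1 : (gg κ a u).imI = 0) (h2 : (gg κ a u).imJ = 0)
    (h3 : (gg κ a u).imK = 0) (h4 : rr κ a u = 0) : False := by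
  have hg : gg κ a u = 0 := hq_ext h0 h1 h2 h3
  unfold gg at hg
  rw [Quaternion.normSq_def'] at hk
  by_cases hz : mk4 a.re a.imI κ 0 = 0
  · have e1 := congrArg (fun q : Hq => q.re) hz
    have e2 := congrArg (fun q : Hq => q.imI) hz
    have e3 := congrArg (fun q : Hq => q.imJ) hz
    simp at e1 e2 e3
    rw [rr, e1, e2, e3] at h4
    nlinarith [mul_nonneg (neg_nonneg.2 hu1) (add_nonneg (sq_nonneg a.imJ) (sq_nonneg a.imK))]
  · have hy : mk4 (-2 * u.imI * a.imJ) (-2 * u.imI * a.imK) (-u.imJ) (-u.imK) = 0 := by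
      rcases mul_eq_zero.1 hg with h | h
      · rcases mul_eq_zero.1 h with h | h
        · exact absurd h hz
        · exact h
      · exact absurd h hz
    have e1 := congrArg (fun q : Hq => q.re) hy
    have e2 := congrArg (fun q : Hq => q.imI) hy
    have e3 := congrArg (fun q : Hq => q.imJ) hy
    have e4 := congrArg (fun q : Hq => q.imK) hy
    simp at e1 e2 e3 e4
    have hu : u.imI = -1 := by
      rw [e3, e4] at hn
      have : (u.imI - 1) * (u.imI + 1) = 0 := by linarith
      rcases mul_eq_zero.1 this with h | h <;> linarith
    have hJ : a.imJ = 0 := by rcases e1 with h | h; linarith; exact h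
    have hK : a.imK = 0 := by rcases e2 with h | h; linarith; exact h
    rw [rr, hu, hJ, hK] at h4
    rw [hJ, hK] at hk
    rcases hk with h | h
    · nlinarith [sq_nonneg (a.re ^ 2 + a.imI ^ 2)]
    · nlinarith

section
variable (t₁ σ t κ : ℝ) (a u c v : Hq)
lemma eeval0 : (ee t₁ σ t κ a u).ofLp 0 = -σ * u.imI := rfl
lemma tval0 : (tauRaw σ c v).ofLp 0 = σ * v.imI := rfl
lemma eeval1 : (ee t₁ σ t κ a u).ofLp 1 = t * (gg κ a u).imJ := rfl
lemma tval1 : (tauRaw σ c v).ofLp 1 = σ * v.imJ := rfl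
lemma eeval2 : (ee t₁ σ t κ a u).ofLp 2 = t * (gg κ a u).imK := rfl
lemma tval2 : (tauRaw σ c v).ofLp 2 = σ * v.imK := rfl
lemma eeval3 : (ee t₁ σ t κ a u).ofLp 3 = -(1 - t) * (cc t₁ a * u * star (cc t₁ a)).imI + t * rr κ a u := rfl
lemma tval3 : (tauRaw σ c v).ofLp 3 = (1 - σ) * (c * v * star c).imI := rfl
lemma eeval4 : (ee t₁ σ t κ a u).ofLp 4 = -(1 - t) * (cc t₁ a * u * star (cc t₁ a)).imJ + t * (gg κ a u).re := rfl
lemma tval4 : (tauRaw σ c v).ofLp 4 = (1 - σ) * (c * v * star c).imJ := rfl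
lemma eeval5 : (ee t₁ σ t κ a u).ofLp 5 = -(1 - t) * (cc t₁ a * u * star (cc t₁ a)).imK + t * (gg κ a u).imI := rfl
lemma tval5 : (tauRaw σ c v).ofLp 5 = (1 - σ) * (c * v * star c).imK := rfl
end

set_option maxHeartbeats 2000000 in
lemma S4 (t : ℝ) (a u : Hq) (ht0 : 0 ≤ t) (ht1 : t ≤ 1) (hr : u.re = 0)
    (hn : u.imI ^ 2 + u.imJ ^ 2 + u.imK ^ 2 = 1)
    (hk : 1 / 100 < (Quaternion.normSq a) ^ 2) (hu1 : u.imI ≤ 0)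
    (h1 : t * (gg 0 a u).imJ = 0) (h2 : t * (gg 0 a u).imK = 0)
    (h3 : -(1 - t) * (cc 1 a * u * star (cc 1 a)).imI + t * rr 0 a u = 0)
    (h4 : -(1 - t) * (cc 1 a * u * star (cc 1 a)).imJ + t * (gg 0 a u).re = 0)
    (h5 : -(1 - t) * (cc 1 a * u * star (cc 1 a)).imK + t * (gg 0 a u).imI = 0) : False := by
  have hu : u ≠ 0 := by
    rintro rfl
    simp at hn
  have ha : a ≠ 0 := by
    rintro rfl
    norm_num at hk
  rcases ht0.eq_or_lt with rfl | ht
  · exact conj_ne (cc_ne_zero (t := 1) a ha) hu hr ⟨by linarith, by linarith, by linarith⟩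
  rw [Quaternion.normSq_def'] at hk
  have h1' := (mul_eq_zero.1 h1).resolve_left ht.ne'
  have h2' := (mul_eq_zero.1 h2).resolve_left ht.ne'
  simp [gg, cc, rr, hr] at h1' h2' h3 h4 h5
  have zz : ∀ {x y : ℝ}, x ^ 2 + y ^ 2 = 0 → x = 0 ∧ y = 0 := fun {x y} h =>
    ⟨by nlinarith [sq_nonneg x, sq_nonneg y], by nlinarith [sq_nonneg x, sq_nonneg y]⟩
  have zcase : a.re ^ 2 + a.imI ^ 2 = 0 → False := by
    intro h
    obtain ⟨e1, e2⟩ := zz h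
    rw [e1, e2] at h3
    nlinarith [mul_nonneg (neg_nonneg.2 hu1) (add_nonneg (sq_nonneg a.imJ) (sq_nonneg a.imK))]
  have g1 : (a.re ^ 2 + a.imI ^ 2) * u.imJ = 0 := by linarith
  have g2 : (a.re ^ 2 + a.imI ^ 2) * u.imK = 0 := by linarith
  have e3 := (mul_eq_zero.1 g1).resolve_left zcase
  have e4 := (mul_eq_zero.1 g2).resolve_left zcase
  have hu : u.imI = -1 := by
    rw [e3, e4] at hn
    have : (u.imI - 1) * (u.imI + 1) = 0 := by linarith
    rcases mul_eq_zero.1 this with h | h <;> linarith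
  rw [e3, e4, hu] at h3 h4 h5
  have k4 : (a.re ^ 2 - a.imI ^ 2) * a.imJ - 2 * a.re * a.imI * a.imK = 0 := by linarith
  have k5 : (a.re ^ 2 - a.imI ^ 2) * a.imK + 2 * a.re * a.imI * a.imJ = 0 := by linarith
  have k6 : (a.re ^ 2 + a.imI ^ 2) ^ 2 * (a.imJ ^ 2 + a.imK ^ 2) = 0 := by
    linear_combination ((a.re ^ 2 - a.imI ^ 2) * a.imJ - 2 * a.re * a.imI * a.imK) * k4 +
      ((a.re ^ 2 - a.imI ^ 2) * a.imK + 2 * a.re * a.imI * a.imJ) * k5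
  obtain ⟨hJ, hK⟩ := zz ((mul_eq_zero.1 k6).resolve_left (fun h => zcase (by simpa using h)))
  rw [hJ, hK] at h3 hk
  nlinarith

lemma not_bad {t₁ σ t κ : ℝ} {a u : Hq} (hR : Regime t₁ σ t κ a) (hr : u.re = 0)
    (hn : u.imI ^ 2 + u.imJ ^ 2 + u.imK ^ 2 = 1) : ¬ BadE σ t₁ t κ a u := by
  have hu : u ≠ 0 := by
    rintro rfl
    simp at hn
  rintro (⟨l, hl, h⟩ | ⟨l, hl, h⟩)
  · have a0 := congrFun (congrArg WithLp.ofLp h) 0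
    have a1 := congrFun (congrArg WithLp.ofLp h) 1
    have a2 := congrFun (congrArg WithLp.ofLp h) 2
    have a3 := congrFun (congrArg WithLp.ofLp h) 3
    have a4 := congrFun (congrArg WithLp.ofLp h) 4
    have a5 := congrFun (congrArg WithLp.ofLp h) 5
    simp only [eeval0, eeval1, eeval2, eeval3, eeval4, eeval5, PiLp.smul_apply, smul_eq_mul,
      PiLp.single_apply] at a0 a1 a2 a3 a4 a5
    norm_num [-Quaternion.imI_mul, -Quaternion.imJ_mul, -Quaternion.imK_mul, -mul_eq_zero, Fin.ext_iff] at a0 a1 a2 a3 a4 a5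
    rcases hR with ⟨rfl, rfl, ha⟩ | ⟨rfl, _, _, ha⟩ | ⟨rfl, rfl, rfl, ht0, ht1, hk⟩ | ⟨rfl, rfl, hκ0, hκ1, hk⟩
    · exact conj_ne (cc_ne_zero a ha) hu hr ⟨by linarith, by linarith, by linarith⟩
    · exact conj_ne (cc_ne_zero a ha) hu hr ⟨by linarith, by linarith, by linarith⟩
    · exact S4 t a u ht0 ht1 hr hn hk (by linarith) (by linarith) (by linarith) (by linarith)
        (by linarith) (by linarith)
    · exact V_gg κ a u hκ0 hκ1 hr hn hk (by linarith) (by linarith) (by linarith) (by linarith)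
        (by linarith) (by linarith)
  · have a0 := congrFun (congrArg WithLp.ofLp h) 0
    have a1 := congrFun (congrArg WithLp.ofLp h) 1
    have a2 := congrFun (congrArg WithLp.ofLp h) 2
    have a3 := congrFun (congrArg WithLp.ofLp h) 3
    have a4 := congrFun (congrArg WithLp.ofLp h) 4
    have a5 := congrFun (congrArg WithLp.ofLp h) 5
    simp only [eeval0, eeval1, eeval2, eeval3, eeval4, eeval5, PiLp.smul_apply, smul_eq_mul,
      tval0, tval1, tval2, tval3, tval4, tval5] at a0 a1 a2 a3 a4 a5
    rcases hR with ⟨rfl, rfl, ha⟩ | ⟨rfl, hs, hs1, ha⟩ | ⟨rfl, rfl, rfl, ht0, ht1, hk⟩ | ⟨rfl, rfl, hκ0, hκ1, hk⟩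
    · refine conj_ne (cc_ne_zero (t := t₁) a ha) hu hr ⟨?_, ?_, ?_⟩
      · nlinarith
      · nlinarith
      · nlinarith
    · have : 0 < 1 + l * (1 - σ) := by nlinarith [mul_nonneg hl (sub_nonneg.2 hs1)]
      refine conj_ne (cc_ne_zero (t := t₁) a ha) hu hr ⟨?_, ?_, ?_⟩
      · refine (mul_eq_zero.1 (?_ : (1 + l * (1 - σ)) * _ = 0)).resolve_left this.ne'; linarith
      · refine (mul_eq_zero.1 (?_ : (1 + l * (1 - σ)) * _ = 0)).resolve_left this.ne'; linarith
      · refine (mul_eq_zero.1 (?_ : (1 + l * (1 - σ)) * _ = 0)).resolve_left this.ne'; linarith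
    · have hu1 : u.imI = 0 := by nlinarith
      have hδ : t * (a.re ^ 2 + a.imI ^ 2) + l = 0 := by
        have b1 : (t * (a.re ^ 2 + a.imI ^ 2) + l) * u.imJ = 0 := by
          simp [gg, hu1] at a1
          linarith
        have b2 : (t * (a.re ^ 2 + a.imI ^ 2) + l) * u.imK = 0 := by
          simp [gg, hu1] at a2
          linarith
        rw [hu1] at hn
        linear_combination u.imJ * b1 + u.imK * b2 - (t * (a.re ^ 2 + a.imI ^ 2) + l) * hn
      have hl0 : l = 0 := by
        nlinarith [mul_nonneg ht0 (add_nonneg (sq_nonneg a.re) (sq_nonneg a.imI))]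
      subst hl0
      exact S4 t a u ht0 ht1 hr hn hk hu1.le (by linarith) (by linarith) (by linarith)
        (by linarith) (by linarith)
    · have hu1 : u.imI = 0 := by nlinarith
      simp [rr, hu1] at a3

open Quaternion

open scoped RealInnerProductSpace ContDiff

/-- Reflection in the hyperplane orthogonal to `w`. -/
noncomputable def Hr (w x : E6) : E6 := x - (2 * ⟪w, x⟫ / ⟪w, w⟫) • w

lemma Hr_inner {w : E6} (hw : w ≠ 0) (x y : E6) : ⟪Hr w x, Hr w y⟫ = ⟪x, y⟫ := by
  have h : ⟪w, w⟫ ≠ 0 := inner_self_ne_zero.2 hw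
  simp only [Hr, inner_sub_left, inner_sub_right, inner_smul_left, inner_smul_right,
    RCLike.conj_to_real]
  rw [real_inner_comm w x]
  field_simp
  ring

lemma Hr_sub {a b : E6} (h : ‖a‖ = ‖b‖) (hab : a - b ≠ 0) : Hr (a - b) a = b := by
  have h0 : ⟪a - b, a - b⟫ ≠ 0 := inner_self_ne_zero.2 hab
  have h1 : 2 * ⟪a - b, a⟫ = ⟪a - b, a - b⟫ := by
    simp only [inner_sub_left, inner_sub_right, real_inner_self_eq_norm_sq, h]
    rw [real_inner_comm a b]
    ring
  rw [Hr, h1, div_self h0]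
  simp

lemma Hr_lin (w x y : E6) (α β : ℝ) : Hr w (α • x + β • y) = α • Hr w x + β • Hr w y := by
  simp only [Hr, inner_add_right, inner_smul_right]
  module

lemma Hr_fix {w x : E6} (h : ⟪w, x⟫ = 0) : Hr w x = x := by simp [Hr, h]

noncomputable def e1 : E6 := EuclideanSpace.single 0 1

lemma norm_e1 : ‖e1‖ = 1 := by simp [e1]

noncomputable def ZZ (e τu τv : E6) : E6 :=
  Hr (e - ‖e‖ • e1) (Hr (‖e‖ • τu - ‖τu‖ • e) (‖τu‖⁻¹ • τv))

structure GoodE (e τu : E6) : Prop where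
  h1 : ∀ l : ℝ, 0 ≤ l → e ≠ l • e1
  h2 : ∀ l : ℝ, 0 ≤ l → e ≠ l • τu
  h3 : τu ≠ 0

lemma GoodE.w1 {e τu : E6} (h : GoodE e τu) : ‖e‖ • τu - ‖τu‖ • e ≠ 0 := by
  intro h0
  have hn : ‖τu‖ ≠ 0 := norm_ne_zero_iff.2 h.h3
  apply h.h2 (‖τu‖⁻¹ * ‖e‖) (by positivity)
  rw [mul_smul, sub_eq_zero.1 h0, smul_smul, inv_mul_cancel₀ hn, one_smul]

lemma GoodE.w2 {e τu : E6} (h : GoodE e τu) : e - ‖e‖ • e1 ≠ 0 := by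
  intro h0
  exact h.h1 ‖e‖ (norm_nonneg _) (sub_eq_zero.1 h0)

lemma GoodE.e_ne {e τu : E6} (h : GoodE e τu) : e ≠ 0 := by
  have := h.h1 0 le_rfl
  simpa using this

lemma ZZ_zero {e τu τv : E6} (h : GoodE e τu) (ho : ⟪τv, τu⟫ = 0) : (ZZ e τu τv) 0 = 0 := by
  have hn : ‖τu‖ ≠ 0 := norm_ne_zero_iff.2 h.h3
  have he : ‖e‖ ≠ 0 := norm_ne_zero_iff.2 h.e_ne
  have r1 : Hr (‖e‖ • τu - ‖τu‖ • e) (‖e‖ • τu) = ‖τu‖ • e :=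
    Hr_sub (by simp [norm_smul, mul_comm]) h.w1
  have r2 : Hr (e - ‖e‖ • e1) e = ‖e‖ • e1 := Hr_sub (by simp [norm_smul, norm_e1]) h.w2
  have k1 : ⟪ZZ e τu τv, ‖e‖ • e1⟫ = 0 := by
    rw [← r2, ZZ, Hr_inner h.w2]
    have : ⟪Hr (‖e‖ • τu - ‖τu‖ • e) (‖τu‖⁻¹ • τv), ‖τu‖ • e⟫ = 0 := by
      have := Hr_inner h.w1 (‖τu‖⁻¹ • τv) (‖e‖ • τu)
      rw [r1] at this
      rw [this]
      simp [inner_smul_left, inner_smul_right, ho]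
    rw [inner_smul_right] at this
    exact (mul_eq_zero.1 this).resolve_left hn
  rw [inner_smul_right] at k1
  have k2 := (mul_eq_zero.1 k1).resolve_left he
  rw [e1, EuclideanSpace.inner_single_right] at k2
  simpa using k2

lemma ZZ_eq_zero {e τu τv : E6} (h : GoodE e τu) (h0 : ZZ e τu τv = 0) : τv = 0 := by
  have hn : ‖τu‖ ≠ 0 := norm_ne_zero_iff.2 h.h3
  have : ⟪ZZ e τu τv, ZZ e τu τv⟫ = 0 := by rw [h0]; simp
  rw [ZZ, Hr_inner h.w2, Hr_inner h.w1, inner_self_eq_zero] at this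
  simpa [hn] using this

lemma ZZ_lin (e τu x y : E6) (α β : ℝ) :
    ZZ e τu (α • x + β • y) = α • ZZ e τu x + β • ZZ e τu y := by
  simp only [ZZ]
  rw [← Hr_lin, ← Hr_lin]
  congr 2
  module

/-- value of `ZZ` at the start of the homotopy -/
lemma ZZ_start {τu τv : E6} (ho : ⟪τv, τu⟫ = 0) (he : ⟪τv, e1⟫ = 0) :
    ZZ (-τu) τu τv = ‖τu‖⁻¹ • τv := by
  have h1 : ⟪τu, τv⟫ = 0 := by rw [real_inner_comm]; exact ho
  have h2 : ⟪e1, τv⟫ = 0 := by rw [real_inner_comm]; exact he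
  rw [ZZ, Hr_fix (w := ‖-τu‖ • τu - ‖τu‖ • -τu), Hr_fix]
  · simp [inner_sub_left, inner_smul_left, inner_smul_right, h1, h2]
  · rw [inner_smul_right, inner_sub_left, inner_smul_left, inner_smul_left, inner_neg_left, h1]
    simp

section
variable {F : Type*} [NormedAddCommGroup F] [NormedSpace ℝ F]

lemma ContDiffAt.Hr {w y : F → E6} {x : F} (hw : ContDiffAt ℝ ∞ w x) (hy : ContDiffAt ℝ ∞ y x)
    (h : w x ≠ 0) : ContDiffAt ℝ ∞ (fun z => Hr (w z) (y z)) x := by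
  unfold _root_.Hr
  exact hy.sub (((contDiffAt_const.mul (hw.inner ℝ hy)).div (hw.inner ℝ hw)
    (inner_self_ne_zero.2 h)).smul hw)

lemma ContDiffAt.ZZ {e τu τv : F → E6} {x : F} (he : ContDiffAt ℝ ∞ e x)
    (hu : ContDiffAt ℝ ∞ τu x) (hv : ContDiffAt ℝ ∞ τv x) (h : GoodE (e x) (τu x)) :
    ContDiffAt ℝ ∞ (fun z => ZZ (e z) (τu z) (τv z)) x := by
  unfold _root_.ZZ
  have ne := he.norm ℝ h.e_ne
  have nu := hu.norm ℝ h.h3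
  refine ContDiffAt.Hr (he.sub (ne.smul contDiffAt_const)) (ContDiffAt.Hr ?_ ?_ h.w1) h.w2
  · exact (ne.smul hu).sub (nu.smul he)
  · exact (nu.inv (norm_ne_zero_iff.2 h.h3)).smul hv
end

lemma tauRaw_inner (σ : ℝ) (c u v : Hq) :
    ⟪tauRaw σ c v, tauRaw σ c u⟫ =
      (σ ^ 2 + (1 - σ) ^ 2 * (Quaternion.normSq c) ^ 2) *
        (v.imI * u.imI + v.imJ * u.imJ + v.imK * u.imK) := by
  rw [PiLp.inner_apply]
  simp only [Fin.sum_univ_six, tval0, tval1, tval2, tval3, tval4, tval5, Quaternion.normSq_def']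
  simp
  ring

lemma tauRaw_lin (σ : ℝ) (c u v : Hq) (α β : ℝ) :
    tauRaw σ c (α • u + β • v) = α • tauRaw σ c u + β • tauRaw σ c v := by
  ext i
  fin_cases i <;> simp [tauRaw] <;> ring

lemma Regime.N_pos {t₁ σ t κ : ℝ} {a : Hq} (hR : Regime t₁ σ t κ a) :
    0 < σ ^ 2 + (1 - σ) ^ 2 * (Quaternion.normSq (cc t₁ a)) ^ 2 := by
  rcases hR with ⟨rfl, rfl, ha⟩ | ⟨rfl, hs, hs1, ha⟩ | ⟨rfl, rfl, rfl, ht0, ht1, hk⟩ |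
    ⟨rfl, rfl, hκ0, hκ1, hk⟩
  · have := Quaternion.normSq_ne_zero.2 (cc_ne_zero (t := t₁) a ha)
    positivity
  · positivity
  · norm_num
  · norm_num

lemma Regime.tau_zero {t₁ σ t κ : ℝ} {a v : Hq} (hR : Regime t₁ σ t κ a) (hv : v.re = 0)
    (h : tauRaw σ (cc t₁ a) v = 0) : v = 0 := by
  have h1 : ⟪tauRaw σ (cc t₁ a) v, tauRaw σ (cc t₁ a) v⟫ = 0 := by rw [h]; simp
  rw [tauRaw_inner] at h1
  have h2 := (mul_eq_zero.1 h1).resolve_left hR.N_pos.ne'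
  apply hq_ext
  · simpa using hv
  · simp; nlinarith [sq_nonneg v.imI, sq_nonneg v.imJ, sq_nonneg v.imK]
  · simp; nlinarith [sq_nonneg v.imI, sq_nonneg v.imJ, sq_nonneg v.imK]
  · simp; nlinarith [sq_nonneg v.imI, sq_nonneg v.imJ, sq_nonneg v.imK]

lemma Regime.good {t₁ σ t κ : ℝ} {a u : Hq} (hR : Regime t₁ σ t κ a) (hr : u.re = 0)
    (hn : u.imI ^ 2 + u.imJ ^ 2 + u.imK ^ 2 = 1) :
    GoodE (ee t₁ σ t κ a u) (tauRaw σ (cc t₁ a) u) where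
  h1 l hl h := not_bad hR hr hn (Or.inl ⟨l, hl, h⟩)
  h2 l hl h := not_bad hR hr hn (Or.inr ⟨l, hl, h⟩)
  h3 h := by
    have := hR.tau_zero hr h
    subst this
    simp at hn


section cd
variable {F : Type*} [NormedAddCommGroup F] [NormedSpace ℝ F]

noncomputable def reL : Hq →L[ℝ] ℝ :=
  { toFun := fun q => q.re, map_add' := fun _ _ => rfl, map_smul' := fun _ _ => rfl,
    cont := Quaternion.continuous_re }
noncomputable def imIL : Hq →L[ℝ] ℝ :=
  { toFun := fun q => q.imI, map_add' := fun _ _ => rfl, map_smul' := fun _ _ => rfl,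
    cont := Quaternion.continuous_imI }
noncomputable def imJL : Hq →L[ℝ] ℝ :=
  { toFun := fun q => q.imJ, map_add' := fun _ _ => rfl, map_smul' := fun _ _ => rfl,
    cont := Quaternion.continuous_imJ }
noncomputable def imKL : Hq →L[ℝ] ℝ :=
  { toFun := fun q => q.imK, map_add' := fun _ _ => rfl, map_smul' := fun _ _ => rfl,
    cont := Quaternion.continuous_imK }
noncomputable def starHL : Hq →L[ℝ] Hq :=
  { toFun := fun q => star q, map_add' := fun _ _ => star_add _ _,
    map_smul' := fun r q => by simp, cont := continuous_star }

lemma mk4_eq (a b c d : ℝ) : mk4 a b c d =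
    a • mk4 1 0 0 0 + b • mk4 0 1 0 0 + c • mk4 0 0 1 0 + d • mk4 0 0 0 1 := by
  apply hq_ext <;> simp

variable {x : F} {f g : F → Hq}

lemma cd_re (hf : ContDiffAt ℝ ∞ f x) : ContDiffAt ℝ ∞ (fun z => (f z).re) x :=
  reL.contDiff.contDiffAt.comp x hf
lemma cd_imI (hf : ContDiffAt ℝ ∞ f x) : ContDiffAt ℝ ∞ (fun z => (f z).imI) x :=
  imIL.contDiff.contDiffAt.comp x hf
lemma cd_imJ (hf : ContDiffAt ℝ ∞ f x) : ContDiffAt ℝ ∞ (fun z => (f z).imJ) x :=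
  imJL.contDiff.contDiffAt.comp x hf
lemma cd_imK (hf : ContDiffAt ℝ ∞ f x) : ContDiffAt ℝ ∞ (fun z => (f z).imK) x :=
  imKL.contDiff.contDiffAt.comp x hf
lemma cd_star (hf : ContDiffAt ℝ ∞ f x) : ContDiffAt ℝ ∞ (fun z => star (f z)) x :=
  starHL.contDiff.contDiffAt.comp x hf
lemma cd_normSq (hf : ContDiffAt ℝ ∞ f x) :
    ContDiffAt ℝ ∞ (fun z => Quaternion.normSq (f z)) x := by
  simp only [Quaternion.normSq_def]
  exact cd_re (hf.mul (cd_star hf))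
lemma cd_mk4 {a b c d : F → ℝ} (ha : ContDiffAt ℝ ∞ a x) (hb : ContDiffAt ℝ ∞ b x)
    (hc : ContDiffAt ℝ ∞ c x) (hd : ContDiffAt ℝ ∞ d x) :
    ContDiffAt ℝ ∞ (fun z => mk4 (a z) (b z) (c z) (d z)) x := by
  simp only [mk4_eq (a _)]
  exact (((ha.smul contDiffAt_const).add (hb.smul contDiffAt_const)).add
    (hc.smul contDiffAt_const)).add (hd.smul contDiffAt_const)

lemma cd_vec6 {a b c d e f : F → ℝ} (ha : ContDiffAt ℝ ∞ a x) (hb : ContDiffAt ℝ ∞ b x)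
    (hc : ContDiffAt ℝ ∞ c x) (hd : ContDiffAt ℝ ∞ d x) (he : ContDiffAt ℝ ∞ e x)
    (hf : ContDiffAt ℝ ∞ f x) :
    ContDiffAt ℝ ∞ (fun z => (!₂[a z, b z, c z, d z, e z, f z] : E6)) x := by
  rw [contDiffAt_euclidean]
  intro i
  fin_cases i <;> simpa

lemma cd_cc {t : F → ℝ} (ht : ContDiffAt ℝ ∞ t x) (hf : ContDiffAt ℝ ∞ f x) :
    ContDiffAt ℝ ∞ (fun z => cc (t z) (f z)) x := by
  unfold cc
  have h0 := cd_re hf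
  have h1 := cd_imI hf
  have h2 := cd_imJ hf
  have h3 := cd_imK hf
  apply cd_mk4 <;> fun_prop

lemma cd_tau {t : F → ℝ} (ht : ContDiffAt ℝ ∞ t x) (hf : ContDiffAt ℝ ∞ f x)
    (hg : ContDiffAt ℝ ∞ g x) :
    ContDiffAt ℝ ∞ (fun z => tauRaw (t z) (f z) (g z)) x := by
  unfold tauRaw
  have h0 := cd_re hg
  have h1 := cd_imI hg
  have h2 := cd_imJ hg
  have h3 := cd_imK hg
  have k := (hf.mul hg).mul (cd_star hf)
  have k1 := cd_imI k
  have k2 := cd_imJ k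
  have k3 := cd_imK k
  apply cd_vec6
  · exact ht.mul h1
  · exact ht.mul h2
  · exact ht.mul h3
  · exact (contDiffAt_const.sub ht).mul k1
  · exact (contDiffAt_const.sub ht).mul k2
  · exact (contDiffAt_const.sub ht).mul k3

lemma cd_gg {t : F → ℝ} (ht : ContDiffAt ℝ ∞ t x) (hf : ContDiffAt ℝ ∞ f x)
    (hg : ContDiffAt ℝ ∞ g x) :
    ContDiffAt ℝ ∞ (fun z => gg (t z) (f z) (g z)) x := by
  unfold gg
  have h0 := cd_re hf
  have h1 := cd_imI hf
  have h2 := cd_imJ hf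
  have h3 := cd_imK hf
  have k1 := cd_imI hg
  have k2 := cd_imJ hg
  have k3 := cd_imK hg
  have z : ContDiffAt ℝ ∞ (fun z => mk4 (f z).re (f z).imI (t z) 0) x :=
    cd_mk4 h0 h1 ht contDiffAt_const
  refine (z.mul ?_).mul z
  apply cd_mk4 <;> fun_prop

lemma cd_rr {t : F → ℝ} (ht : ContDiffAt ℝ ∞ t x) (hf : ContDiffAt ℝ ∞ f x)
    (hg : ContDiffAt ℝ ∞ g x) :
    ContDiffAt ℝ ∞ (fun z => rr (t z) (f z) (g z)) x := by
  unfold rr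
  have h0 := cd_re hf
  have h1 := cd_imI hf
  have h2 := cd_imJ hf
  have h3 := cd_imK hf
  have k1 := cd_imI hg
  fun_prop

lemma cd_ee {t₁ σ t κ : F → ℝ} (ht1 : ContDiffAt ℝ ∞ t₁ x) (hs : ContDiffAt ℝ ∞ σ x)
    (ht : ContDiffAt ℝ ∞ t x) (hκ : ContDiffAt ℝ ∞ κ x) (hf : ContDiffAt ℝ ∞ f x)
    (hg : ContDiffAt ℝ ∞ g x) :
    ContDiffAt ℝ ∞ (fun z => ee (t₁ z) (σ z) (t z) (κ z) (f z) (g z)) x := by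
  unfold ee
  have k1 := cd_imI hg
  have c := cd_cc ht1 hf
  have m := (c.mul hg).mul (cd_star c)
  have m1 := cd_imI m
  have m2 := cd_imJ m
  have m3 := cd_imK m
  have G := cd_gg hκ hf hg
  have g0 := cd_re G
  have g1 := cd_imI G
  have g2 := cd_imJ G
  have g3 := cd_imK G
  have r := cd_rr hκ hf hg
  have t' : ContDiffAt ℝ ∞ (fun z => -(1 - t z)) x := (contDiffAt_const.sub ht).neg
  apply cd_vec6
  · exact hs.neg.mul k1
  · exact ht.mul g2
  · exact ht.mul g3
  · exact (t'.mul m1).add (ht.mul r)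
  · exact (t'.mul m2).add (ht.mul g0)
  · exact (t'.mul m3).add (ht.mul g1)

end cd

noncomputable def pt1 (ρ : ℝ) : ℝ := Real.smoothTransition (10 - 20 * ρ)
noncomputable def pσ (ρ : ℝ) : ℝ := Real.smoothTransition (9 - 20 * ρ)
noncomputable def pt (ρ : ℝ) : ℝ := Real.smoothTransition (8 - 20 * ρ)
noncomputable def pκ (ρ : ℝ) : ℝ := Real.smoothTransition (7 - 20 * ρ)

lemma cd_param (b : ℝ) : ContDiff ℝ ∞ (fun ρ : ℝ => Real.smoothTransition (b - 20 * ρ)) :=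
  Real.smoothTransition.contDiff.comp (by fun_prop)

lemma regime_of {ρ : ℝ} {a : Hq} (h0 : 0 ≤ ρ) (h1 : ρ < 3 / 5)
    (ha : Quaternion.normSq a = ρ * (1 - ρ)) :
    Regime (pt1 ρ) (pσ ρ) (pt ρ) (pκ ρ) a := by
  have hne : 3 / 10 ≤ ρ → 1 / 100 < (Quaternion.normSq a) ^ 2 := by
    intro h
    rw [ha]
    have : 1 / 10 < ρ * (1 - ρ) := by nlinarith
    nlinarith
  have hne' : 3 / 10 ≤ ρ → a ≠ 0 := by
    intro h h'
    have := hne h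
    rw [h'] at this
    norm_num at this
  unfold Regime
  by_cases c1 : 9 / 20 ≤ ρ
  · left
    exact ⟨Real.smoothTransition.zero_of_nonpos (by linarith),
      Real.smoothTransition.zero_of_nonpos (by linarith), hne' (by linarith)⟩
  by_cases c2 : 8 / 20 ≤ ρ
  · right; left
    exact ⟨Real.smoothTransition.zero_of_nonpos (by linarith),
      Real.smoothTransition.pos_of_pos (by linarith),
      Real.smoothTransition.le_one _, hne' (by linarith)⟩
  by_cases c3 : 7 / 20 ≤ ρ
  · right; right; left
    exact ⟨Real.smoothTransition.one_of_one_le (by linarith),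
      Real.smoothTransition.one_of_one_le (by linarith),
      Real.smoothTransition.zero_of_nonpos (by linarith),
      Real.smoothTransition.nonneg _, Real.smoothTransition.le_one _, hne (by linarith)⟩
  · right; right; right
    refine ⟨Real.smoothTransition.one_of_one_le (by linarith),
      Real.smoothTransition.one_of_one_le (by linarith),
      Real.smoothTransition.nonneg _, Real.smoothTransition.le_one _, ?_⟩
    by_cases c4 : 3 / 10 ≤ ρ
    · exact Or.inr (hne c4)
    · exact Or.inl (Real.smoothTransition.one_of_one_le (by linarith))

noncomputable def qi : Hq := mk4 0 1 0 0
noncomputable def qj : Hq := mk4 0 0 1 0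
noncomputable def qk : Hq := mk4 0 0 0 1

noncomputable def fr (p m : Hq) : Hq := (Quaternion.normSq p)⁻¹ • (star p * m * p)

noncomputable def ZI (p q m : Hq) : E6 :=
  ZZ (ee (pt1 (Quaternion.normSq q)) (pσ (Quaternion.normSq q)) (pt (Quaternion.normSq q))
      (pκ (Quaternion.normSq q)) (star q * p) (fr p qi))
    (tauRaw (pσ (Quaternion.normSq q)) (cc (pt1 (Quaternion.normSq q)) (star q * p)) (fr p qi))
    (tauRaw (pσ (Quaternion.normSq q)) (cc (pt1 (Quaternion.normSq q)) (star q * p)) (fr p m))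

noncomputable def lam (z : E6) : Hq := mk4 0 (z 3) (z 4) (z 5)

abbrev WW := ℝ × ℝ × Hq × Hq

noncomputable def GI (p q m : Hq) : WW :=
  (ZI p q m 1, ZI p q m 2,
    (Quaternion.normSq p)⁻¹ • (star (star q * p) * lam (ZI p q m) * (star q * p)),
    Quaternion.normSq p • lam (ZI p q m))

noncomputable def GO (p q m : Hq) : WW :=
  (0, 0, star q * m * q,
    ((Quaternion.normSq q) ^ 2)⁻¹ • ((star q * p) * (star q * m * q) * star (star q * p)))

open Classical in
noncomputable def GG (p q m : Hq) : WW :=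
  if Quaternion.normSq q < 3 / 5 then GI p q m else GO p q m

lemma fr_unit {p : Hq} (hp : p ≠ 0) : (fr p qi).re = 0 ∧
    (fr p qi).imI ^ 2 + (fr p qi).imJ ^ 2 + (fr p qi).imK ^ 2 = 1 := by
  have h := Quaternion.normSq_ne_zero.2 hp
  have h0 : (fr p qi).re = 0 := by
    simp [fr, qi]
    right
    ring
  refine ⟨h0, ?_⟩
  have h1 : Quaternion.normSq (fr p qi) = 1 := by
    rw [fr, Quaternion.normSq_smul, map_mul, map_mul, Quaternion.normSq_star]
    have : Quaternion.normSq qi = 1 := by simp [Quaternion.normSq_def', qi]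
    rw [this]
    field_simp
  rw [Quaternion.normSq_def', h0] at h1
  linarith

lemma fr_inner (p : Hq) {m : Hq} (hm : m.re = 0) (hm' : m.imI = 0) : (fr p m).re = 0 ∧
    (fr p m).imI * (fr p qi).imI + (fr p m).imJ * (fr p qi).imJ +
      (fr p m).imK * (fr p qi).imK = 0 := by
  constructor
  · simp [fr, hm, hm']
    right
    ring
  · simp only [fr, qi]
    simp [hm, hm']
    ring


lemma fr_lin (p m n : Hq) (α β : ℝ) : fr p (α • m + β • n) = α • fr p m + β • fr p n := by
  simp only [fr, mul_add, add_mul, smul_add, mul_smul_comm, smul_mul_assoc, smul_smul]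
  rw [mul_comm α, mul_comm β]

lemma ZI_lin (p q m n : Hq) (α β : ℝ) :
    ZI p q (α • m + β • n) = α • ZI p q m + β • ZI p q n := by
  simp only [ZI]
  rw [fr_lin, tauRaw_lin, ZZ_lin]

lemma lam_lin (z w : E6) (α β : ℝ) : lam (α • z + β • w) = α • lam z + β • lam w := by
  apply hq_ext <;> simp [lam]

lemma GI_lin (p q m n : Hq) (α β : ℝ) :
    GI p q (α • m + β • n) = α • GI p q m + β • GI p q n := by
  simp only [GI, ZI_lin, lam_lin]
  ext1
  · simp
  ext1
  · simp
  ext1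
  · simp only [Prod.smul_mk, Prod.mk_add_mk, mul_add, add_mul, smul_add, mul_smul_comm,
      smul_mul_assoc, smul_smul]
    rw [mul_comm α, mul_comm β]
  · simp only [Prod.smul_mk, Prod.mk_add_mk, smul_add, smul_smul]
    rw [mul_comm α, mul_comm β]

lemma GO_lin (p q m n : Hq) (α β : ℝ) :
    GO p q (α • m + β • n) = α • GO p q m + β • GO p q n := by
  simp only [GO]
  ext1
  · simp
  ext1
  · simp
  ext1
  · simp only [Prod.smul_mk, Prod.mk_add_mk, mul_add, add_mul, mul_smul_comm, smul_mul_assoc]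
  · simp only [Prod.smul_mk, Prod.mk_add_mk, mul_add, add_mul, smul_add, mul_smul_comm,
      smul_mul_assoc, smul_smul]
    rw [mul_comm α, mul_comm β]

lemma GG_lin (p q m n : Hq) (α β : ℝ) :
    GG p q (α • m + β • n) = α • GG p q m + β • GG p q n := by
  unfold GG
  split_ifs
  · exact GI_lin ..
  · exact GO_lin ..

lemma fr_mul {g : Hq} (hg : Quaternion.normSq g = 1) (p m : Hq) :
    fr (g * p) m = fr p (star g * m * g) := by
  simp only [fr, map_mul, hg, one_mul, star_mul, mul_assoc]

lemma a_mul {g : Hq} (hg : Quaternion.normSq g = 1) (p q : Hq) :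
    star (g * q) * (g * p) = star q * p := by
  have : star g * g = 1 := by rw [Quaternion.star_mul_self, hg]; simp
  rw [star_mul, mul_assoc, ← mul_assoc (star g), this, one_mul]

lemma GG_rot {g : Hq} (hg : Quaternion.normSq g = 1) (hi : star g * qi * g = qi) (p q m : Hq) :
    GG (g * p) (g * q) m = GG p q (star g * m * g) := by
  have hn : ∀ r : Hq, Quaternion.normSq (g * r) = Quaternion.normSq r := by simp [hg]
  have hZ : ZI (g * p) (g * q) m = ZI p q (star g * m * g) := by
    simp only [ZI, fr_mul hg, a_mul hg, hn, hi]
  have hs : star (g * q) * m * (g * q) = star q * (star g * m * g) * q := by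
    simp only [star_mul, mul_assoc]
  unfold GG
  rw [hn]
  split_ifs
  · simp only [GI, hZ, hn, a_mul hg]
  · simp only [GO, hn, a_mul hg, hs]

lemma normSq_a (p q : Hq) : Quaternion.normSq (star q * p) =
    Quaternion.normSq q * Quaternion.normSq p := by
  simp

lemma p_ne {p q : Hq} (h : Quaternion.normSq p + Quaternion.normSq q = 1)
    (hq : Quaternion.normSq q < 3 / 5) : p ≠ 0 := by
  rintro rfl
  simp at h
  linarith

lemma q_ne {q : Hq} (hq : ¬ Quaternion.normSq q < 3 / 5) : q ≠ 0 := by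
  rintro rfl
  apply hq
  simp

lemma regime_pq {p q : Hq} (h : Quaternion.normSq p + Quaternion.normSq q = 1)
    (hq : Quaternion.normSq q < 3 / 5) :
    Regime (pt1 (Quaternion.normSq q)) (pσ (Quaternion.normSq q)) (pt (Quaternion.normSq q))
      (pκ (Quaternion.normSq q)) (star q * p) := by
  apply regime_of Quaternion.normSq_nonneg hq
  rw [normSq_a, ← h]
  ring

lemma good_pq {p q : Hq} (h : Quaternion.normSq p + Quaternion.normSq q = 1)
    (hq : Quaternion.normSq q < 3 / 5) :
    GoodE (ee (pt1 (Quaternion.normSq q)) (pσ (Quaternion.normSq q)) (pt (Quaternion.normSq q))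
      (pκ (Quaternion.normSq q)) (star q * p) (fr p qi))
    (tauRaw (pσ (Quaternion.normSq q)) (cc (pt1 (Quaternion.normSq q)) (star q * p))
      (fr p qi)) :=
  (regime_pq h hq).good (fr_unit (p_ne h hq)).1 (fr_unit (p_ne h hq)).2

lemma GG_inj {p q m : Hq} (h : Quaternion.normSq p + Quaternion.normSq q = 1)
    (hm : m.re = 0) (hm' : m.imI = 0) (h0 : GG p q m = 0) : m = 0 := by
  unfold GG at h0
  split_ifs at h0 with hq
  · have hp := p_ne h hq
    have hp' := Quaternion.normSq_ne_zero.2 hp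
    simp only [GI, Prod.mk_eq_zero, smul_eq_zero, hp', false_or] at h0
    obtain ⟨h1, h2, -, h3⟩ := h0
    have c3 := congrArg (fun q : Hq => q.imI) h3
    have c4 := congrArg (fun q : Hq => q.imJ) h3
    have c5 := congrArg (fun q : Hq => q.imK) h3
    simp [lam] at c3 c4 c5
    have hfr := fr_inner p hm hm'
    have c0 : ZI p q m 0 = 0 := by
      apply ZZ_zero (good_pq h hq)
      rw [tauRaw_inner, hfr.2, mul_zero]
    have hZ : ZI p q m = 0 := by
      ext i
      fin_cases i <;> simpa
    have := (regime_pq h hq).tau_zero hfr.1 (ZZ_eq_zero (good_pq h hq) hZ)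
    rw [fr] at this
    simpa [hp] using this
  · have hq' := q_ne hq
    simp only [GO, Prod.mk_eq_zero] at h0
    simpa [hq'] using h0.2.2.1

def Dom (p q : Hq) : Prop := Quaternion.normSq q < 3 / 5 → p ≠ 0


lemma conj_conj (a b : Hq) : a * (star a * b * a) * star a = (Quaternion.normSq a) ^ 2 • b := by
  have : a * (star a * b * a) * star a = (a * star a) * b * (a * star a) := by
    simp only [mul_assoc]
  rw [this, Quaternion.self_mul_star]
  rw [Quaternion.coe_mul_eq_smul, Quaternion.mul_coe_eq_smul, smul_smul, sq]

lemma conj_conj' (a b : Hq) : star a * (a * b * star a) * a = (Quaternion.normSq a) ^ 2 • b := by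
  have := conj_conj (star a) b
  simpa using this

lemma GG_rel {p q : Hq} (h : Dom p q) (m : Hq) :
    (star q * p) * (GG p q m).2.2.1 * star (star q * p) =
      (Quaternion.normSq q) ^ 2 • (GG p q m).2.2.2 ∧
    star (star q * p) * (GG p q m).2.2.2 * (star q * p) =
      (Quaternion.normSq p) ^ 2 • (GG p q m).2.2.1 := by
  unfold GG
  split_ifs with hq
  · have hp := Quaternion.normSq_ne_zero.2 (h hq)
    simp only [GI]
    constructor
    · rw [mul_smul_comm, smul_mul_assoc, conj_conj, normSq_a, smul_smul, smul_smul]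
      congr 1
      field_simp
    · rw [mul_smul_comm, smul_mul_assoc, smul_smul]
      congr 1
      field_simp
  · have hq' := Quaternion.normSq_ne_zero.2 (q_ne hq)
    simp only [GO]
    constructor
    · rw [smul_smul, mul_inv_cancel₀ (pow_ne_zero 2 hq'), one_smul]
    · rw [mul_smul_comm, smul_mul_assoc, conj_conj', normSq_a, smul_smul]
      congr 1
      field_simp

lemma GG_im {p q m : Hq} (hm : m.re = 0) :
    (GG p q m).2.2.1.re = 0 ∧ (GG p q m).2.2.2.re = 0 := by
  unfold GG
  have c1 : ∀ a b : Hq, b.re = 0 → (a * b * star a).re = 0 := by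
    intro a b hb
    simp [hb]; ring
  have c2 : ∀ a b : Hq, b.re = 0 → (star a * b * a).re = 0 := by
    intro a b hb
    have := c1 (star a) b hb
    rwa [star_star] at this
  split_ifs with hq
  · simp only [GI]
    constructor
    · rw [Quaternion.re_smul, c2 _ _ rfl, smul_zero]
    · rw [Quaternion.re_smul]; simp [lam]
  · simp only [GO]
    constructor
    · exact c2 _ _ hm
    · rw [Quaternion.re_smul, c1 _ _ (c2 _ _ hm), smul_zero]

lemma GI_eq_GO {p q m : Hq} (hp : p ≠ 0) (hq : 1 / 2 ≤ Quaternion.normSq q)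
    (hm : m.re = 0) (hm' : m.imI = 0) : GI p q m = GO p q m := by
  have hq0 : q ≠ 0 := by
    rintro rfl
    norm_num at hq
  have np := Quaternion.normSq_ne_zero.2 hp
  have nq := Quaternion.normSq_ne_zero.2 hq0
  set a := star q * p with ha
  have na : Quaternion.normSq a = Quaternion.normSq q * Quaternion.normSq p := normSq_a p q
  have e1' : pt1 (Quaternion.normSq q) = 0 :=
    Real.smoothTransition.zero_of_nonpos (by linarith)
  have e2 : pσ (Quaternion.normSq q) = 0 :=
    Real.smoothTransition.zero_of_nonpos (by linarith)
  have e3 : pt (Quaternion.normSq q) = 0 :=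
    Real.smoothTransition.zero_of_nonpos (by linarith)
  have hee : ∀ κ : ℝ, ee 0 0 0 κ a (fr p qi) = - tauRaw 0 (cc 0 a) (fr p qi) := by
    intro κ
    ext i
    fin_cases i <;> simp [ee, tauRaw, -Quaternion.imI_mul, -Quaternion.imJ_mul,
      -Quaternion.imK_mul]
  have hfr := fr_inner p hm hm'
  have hN : ‖tauRaw 0 (cc 0 a) (fr p qi)‖ = (Quaternion.normSq a) ^ 2 := by
    have : ⟪tauRaw 0 (cc 0 a) (fr p qi), tauRaw 0 (cc 0 a) (fr p qi)⟫ =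
        ((Quaternion.normSq a) ^ 2) ^ 2 := by
      rw [tauRaw_inner, cc_zero, map_mul]
      linear_combination (Quaternion.normSq a) ^ 4 * (fr_unit hp).2
    rw [real_inner_self_eq_norm_sq] at this
    exact (pow_left_inj₀ (norm_nonneg _) (by positivity) two_ne_zero).1 this
  have hZ : ZI p q m = ((Quaternion.normSq a) ^ 2)⁻¹ • tauRaw 0 (cc 0 a) (fr p m) := by
    simp only [ZI, e1', e2, e3]
    rw [← ha, hee, ZZ_start, hN]
    · rw [tauRaw_inner, hfr.2, mul_zero]
    · rw [e1, EuclideanSpace.inner_single_right]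
      simp [tauRaw]
  have hl : lam (ZI p q m) = ((Quaternion.normSq a) ^ 2)⁻¹ • (a * a * fr p m * star (a * a)) := by
    rw [hZ, cc_zero]
    apply hq_ext
    · rw [Quaternion.re_smul, conj_im _ _ hfr.1, smul_zero]; rfl
    · simp only [lam, mk4_imI, Quaternion.imI_smul, PiLp.smul_apply, tval3]; simp
    · simp only [lam, mk4_imJ, Quaternion.imJ_smul, PiLp.smul_apply, tval4]; simp
    · simp only [lam, mk4_imK, Quaternion.imK_smul, PiLp.smul_apply, tval5]; simp
  have hav : a * fr p m * star a = Quaternion.normSq p • (star q * m * q) := by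
    have : a * (star p * m * p) * star a = star q * (p * (star p * m * p) * star p) * q := by
      rw [ha, star_mul, star_star]
      simp only [mul_assoc]
    rw [fr, mul_smul_comm, smul_mul_assoc, this, conj_conj, mul_smul_comm, smul_mul_assoc,
      smul_smul]
    congr 1
    field_simp
  have haa : a * a * fr p m * star (a * a) =
      Quaternion.normSq p • (a * (star q * m * q) * star a) := by
    have : a * a * fr p m * star (a * a) = a * (a * fr p m * star a) * star a := by
      rw [star_mul]
      simp only [mul_assoc]
    rw [this, hav, mul_smul_comm, smul_mul_assoc]
  simp only [GI, GO]
  rw [← ha]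
  ext1
  · simp [hZ, tauRaw]
  ext1
  · simp [hZ, tauRaw]
  ext1
  · simp only
    rw [hl, haa, mul_smul_comm, mul_smul_comm, smul_mul_assoc, smul_mul_assoc, conj_conj',
      smul_smul, smul_smul, smul_smul, na]
    rw [show (Quaternion.normSq p)⁻¹ * ((Quaternion.normSq q * Quaternion.normSq p) ^ 2)⁻¹ *
      Quaternion.normSq p * (Quaternion.normSq q * Quaternion.normSq p) ^ 2 = 1 by field_simp]
    rw [one_smul]
  · simp only
    rw [hl, haa, smul_smul, smul_smul, na]
    congr 1
    field_simp

lemma cd_GI {p q : Hq} (m : Hq) (h : Quaternion.normSq p + Quaternion.normSq q = 1)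
    (hq : Quaternion.normSq q < 3 / 5) :
    ContDiffAt ℝ ∞ (fun x : Hq × Hq => GI x.1 x.2 m) (p, q) := by
  have hp := p_ne h hq
  have c1 : ContDiffAt ℝ ∞ (fun x : Hq × Hq => x.1) (p, q) := contDiffAt_fst
  have c2 : ContDiffAt ℝ ∞ (fun x : Hq × Hq => x.2) (p, q) := contDiffAt_snd
  have n1 := cd_normSq c1
  have n2 := cd_normSq c2
  have n1' : ContDiffAt ℝ ∞ (fun x : Hq × Hq => (Quaternion.normSq x.1)⁻¹) (p, q) :=
    n1.inv (Quaternion.normSq_ne_zero.2 hp)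
  have ca := (cd_star c2).mul c1
  have cf : ∀ m, ContDiffAt ℝ ∞ (fun x : Hq × Hq => fr x.1 m) (p, q) := fun m =>
    n1'.smul (((cd_star c1).mul contDiffAt_const).mul c1)
  have cp : ∀ b : ℝ, ContDiffAt ℝ ∞
      (fun x : Hq × Hq => Real.smoothTransition (b - 20 * Quaternion.normSq x.2)) (p, q) :=
    fun b => (cd_param b).contDiffAt.comp (p, q) n2
  have t1 : ContDiffAt ℝ ∞ (fun x : Hq × Hq => pt1 (Quaternion.normSq x.2)) (p, q) := cp 10
  have t2 : ContDiffAt ℝ ∞ (fun x : Hq × Hq => pσ (Quaternion.normSq x.2)) (p, q) := cp 9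
  have t3 : ContDiffAt ℝ ∞ (fun x : Hq × Hq => pt (Quaternion.normSq x.2)) (p, q) := cp 8
  have t4 : ContDiffAt ℝ ∞ (fun x : Hq × Hq => pκ (Quaternion.normSq x.2)) (p, q) := cp 7
  have cZ : ContDiffAt ℝ ∞ (fun x : Hq × Hq => ZI x.1 x.2 m) (p, q) :=
    ContDiffAt.ZZ (cd_ee t1 t2 t3 t4 ca (cf qi)) (cd_tau t2 (cd_cc t1 ca) (cf qi))
      (cd_tau t2 (cd_cc t1 ca) (cf m)) (good_pq h hq)
  have cc := contDiffAt_euclidean.1 cZ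
  have cl : ContDiffAt ℝ ∞ (fun x : Hq × Hq => lam (ZI x.1 x.2 m)) (p, q) :=
    cd_mk4 contDiffAt_const (cc 3) (cc 4) (cc 5)
  unfold GI
  exact (cc 1).prodMk ((cc 2).prodMk ((n1'.smul (((cd_star ca).mul cl).mul ca)).prodMk
    (n1.smul cl)))

lemma cd_GO {p q : Hq} (m : Hq) (hq : q ≠ 0) :
    ContDiffAt ℝ ∞ (fun x : Hq × Hq => GO x.1 x.2 m) (p, q) := by
  have c1 : ContDiffAt ℝ ∞ (fun x : Hq × Hq => x.1) (p, q) := contDiffAt_fst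
  have c2 : ContDiffAt ℝ ∞ (fun x : Hq × Hq => x.2) (p, q) := contDiffAt_snd
  have n2 := cd_normSq c2
  have n2' : ContDiffAt ℝ ∞ (fun x : Hq × Hq => ((Quaternion.normSq x.2) ^ 2)⁻¹) (p, q) :=
    (n2.pow 2).inv (pow_ne_zero 2 (Quaternion.normSq_ne_zero.2 hq))
  have ca := (cd_star c2).mul c1
  have cm : ContDiffAt ℝ ∞ (fun x : Hq × Hq => star x.2 * m * x.2) (p, q) :=
    ((cd_star c2).mul contDiffAt_const).mul c2
  unfold GO
  exact contDiffAt_const.prodMk (contDiffAt_const.prodMk (cm.prodMk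
    (n2'.smul ((ca.mul cm).mul (cd_star ca)))))

lemma cont_nq : Continuous (fun x : Hq × Hq => Quaternion.normSq x.2) :=
  Quaternion.continuous_normSq.comp continuous_snd

open Filter Topology in
lemma dom_ev {p q : Hq} (h : Quaternion.normSq p + Quaternion.normSq q = 1) :
    ∀ᶠ x : Hq × Hq in 𝓝 (p, q), Dom x.1 x.2 := by
  by_cases hp : p = 0
  · have : (3 / 5 : ℝ) < Quaternion.normSq q := by
      rw [hp] at h
      simp at h
      linarith
    have := (cont_nq.continuousAt (x := (p, q))).eventually (lt_mem_nhds this)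
    filter_upwards [this] with x hx hx'
    exact absurd hx' (not_lt.2 hx.le)
  · have : ∀ᶠ x : Hq × Hq in 𝓝 (p, q), x.1 ≠ 0 :=
      continuous_fst.continuousAt.eventually_ne hp
    filter_upwards [this] with x hx _ using hx

open Filter Topology in
lemma cd_GG {p q : Hq} {m : Hq} (h : Quaternion.normSq p + Quaternion.normSq q = 1)
    (hm : m.re = 0) (hm' : m.imI = 0) :
    ContDiffAt ℝ ∞ (fun x : Hq × Hq => GG x.1 x.2 m) (p, q) := by
  by_cases hq : Quaternion.normSq q < 3 / 5
  · apply (cd_GI m h hq).congr_of_eventuallyEq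
    have := (cont_nq.continuousAt (x := (p, q))).eventually (gt_mem_nhds hq)
    filter_upwards [this] with x hx
    exact if_pos hx
  · apply (cd_GO m (q_ne hq)).congr_of_eventuallyEq
    have h2 : (1 / 2 : ℝ) < Quaternion.normSq q := by linarith
    have := (cont_nq.continuousAt (x := (p, q))).eventually (lt_mem_nhds h2)
    filter_upwards [this, dom_ev h] with x hx hd
    unfold GG
    split_ifs with hx'
    · exact GI_eq_GO (hd hx') hx.le hm hm'
    · rfl


noncomputable def UU (p q : Hq) : Hq := Real.exp (GG p q qj).1 • (star p * qi * p)
noncomputable def VV (p q : Hq) : Hq := Real.exp (GG p q qj).1 • (star q * qi * q)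

noncomputable def T0 (p q : Hq) : ℝ :=
  Real.exp (GG p q qj).2.1 * (Quaternion.normSq p - Quaternion.normSq q)
noncomputable def T1 (p q : Hq) : Hq := Real.exp (GG p q qj).2.1 • (star q * p)
noncomputable def T2 (p q : Hq) : Hq := UU p q - (GG p q qj).2.2.1
noncomputable def T3 (p q : Hq) : Hq := VV p q + (GG p q qj).2.2.2

lemma UV_rel (p q : Hq) :
    (star q * p) * UU p q * star (star q * p) = (Quaternion.normSq p) ^ 2 • VV p q ∧
    star (star q * p) * VV p q * (star q * p) = (Quaternion.normSq q) ^ 2 • UU p q := by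
  unfold UU VV
  constructor
  · rw [mul_smul_comm, smul_mul_assoc, smul_comm]
    congr 1
    have : star q * p * (star p * qi * p) * star (star q * p) =
        star q * (p * (star p * qi * p) * star p) * q := by
      rw [star_mul, star_star]; simp only [mul_assoc]
    rw [this, conj_conj, mul_smul_comm, smul_mul_assoc]
  · rw [mul_smul_comm, smul_mul_assoc, smul_comm]
    congr 1
    have : star (star q * p) * (star q * qi * q) * (star q * p) =
        star p * (q * (star q * qi * q) * star q) * p := by
      rw [star_mul, star_star]; simp only [mul_assoc]
    rw [this, conj_conj, mul_smul_comm, smul_mul_assoc]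

lemma T23_re (p q : Hq) : (T2 p q).re = 0 ∧ (T3 p q).re = 0 := by
  have h := GG_im (p := p) (q := q) (m := qj) rfl
  have c2 : ∀ a b : Hq, b.re = 0 → (star a * b * a).re = 0 := by
    intro a b hb
    simp [hb]; ring
  unfold T2 T3 UU VV
  constructor
  · rw [Quaternion.re_sub, h.1, Quaternion.re_smul, c2 _ _ rfl]; simp
  · rw [Quaternion.re_add, h.2, Quaternion.re_smul, c2 _ _ rfl]; simp

lemma dom_sphere {p q : Hq} (h : Quaternion.normSq p + Quaternion.normSq q = 1) : Dom p q :=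
  fun hq => p_ne h hq

lemma normSq_qi : Quaternion.normSq qi = 1 := by simp [Quaternion.normSq_def', qi]

lemma comm_form {g : Hq} (h1 : star g * qi * g = qi) (hn : Quaternion.normSq g = 1) :
    g.imJ = 0 ∧ g.imK = 0 := by
  have h2 : qi * g = g * qi := by
    have : g * (star g * qi * g) = g * qi := by rw [h1]
    rw [← this, mul_assoc, ← mul_assoc, Quaternion.self_mul_star, hn]; simp
  have hJ := congrArg (fun q : Hq => q.imJ) h2
  have hK := congrArg (fun q : Hq => q.imK) h2
  simp [qi] at hJ hK
  constructor <;> linarith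

lemma rot_j (c s : ℝ) : star (mk4 c s 0 0) * qj * mk4 c s 0 0 =
    (c ^ 2 - s ^ 2) • qj + (-2 * c * s) • qk := by
  apply hq_ext <;> simp [qj, qk] <;> ring

lemma rot_i {c s : ℝ} (h : c ^ 2 + s ^ 2 = 1) : star (mk4 c s 0 0) * qi * mk4 c s 0 0 = qi := by
  apply hq_ext <;> simp [qi]
  · ring
  · linarith
  
lemma rot_n {c s : ℝ} (h : c ^ 2 + s ^ 2 = 1) : Quaternion.normSq (mk4 c s 0 0) = 1 := by
  simp [Quaternion.normSq_def', h]

lemma GG_jk {p q : Hq} (h : Quaternion.normSq p + Quaternion.normSq q = 1) {α β : ℝ}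
    (h0 : α • GG p q qj + β • GG p q qk = 0) : α = 0 ∧ β = 0 := by
  rw [← GG_lin] at h0
  have := GG_inj h (by simp [qj, qk]) (by simp [qj, qk]) h0
  have hJ := congrArg (fun q : Hq => q.imJ) this
  have hK := congrArg (fun q : Hq => q.imK) this
  simp [qj, qk] at hJ hK
  exact ⟨hJ, hK⟩

lemma exists_g {p q p' q' : Hq} (h : Quaternion.normSq p + Quaternion.normSq q = 1)
    (hp : Quaternion.normSq p = Quaternion.normSq p')
    (hq : Quaternion.normSq q = Quaternion.normSq q') (ha : star q * p = star q' * p') :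
    ∃ g : Hq, Quaternion.normSq g = 1 ∧ p' = g * p ∧ q' = g * q := by
  by_cases hp0 : p = 0
  · have hp0' : p' = 0 := by
      rw [hp0, map_zero] at hp
      exact Quaternion.normSq_eq_zero.1 hp.symm
    have hq1 : Quaternion.normSq q = 1 := by simpa [hp0] using h
    refine ⟨q' * star q, ?_, ?_, ?_⟩
    · rw [map_mul, Quaternion.normSq_star, ← hq, hq1, one_mul]
    · rw [hp0, hp0', mul_zero]
    · rw [mul_assoc, Quaternion.star_mul_self, hq1]; simp
  · have n0 := Quaternion.normSq_ne_zero.2 hp0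
    have ha' : star p * q = star p' * q' := by
      have := congrArg star ha
      simpa using this
    refine ⟨(Quaternion.normSq p)⁻¹ • (p' * star p), ?_, ?_, ?_⟩
    · rw [Quaternion.normSq_smul, map_mul, Quaternion.normSq_star, ← hp]
      field_simp
    · rw [smul_mul_assoc, mul_assoc, Quaternion.star_mul_self, Quaternion.mul_coe_eq_smul,
        smul_smul, inv_mul_cancel₀ n0, one_smul]
    · rw [smul_mul_assoc, mul_assoc, ha', ← mul_assoc, Quaternion.self_mul_star,
        Quaternion.coe_mul_eq_smul, smul_smul, ← hp, inv_mul_cancel₀ n0, one_smul]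

lemma np_pos {p q : Hq} (h : Quaternion.normSq p + Quaternion.normSq q = 1) :
    0 < (Quaternion.normSq p) ^ 2 + (Quaternion.normSq q) ^ 2 := by
  nlinarith [sq_nonneg (Quaternion.normSq p - Quaternion.normSq q)]

lemma T_inj {p q p' q' : Hq} (h : Quaternion.normSq p + Quaternion.normSq q = 1)
    (h' : Quaternion.normSq p' + Quaternion.normSq q' = 1)
    (h0 : T0 p q = T0 p' q') (h1 : T1 p q = T1 p' q') (h2 : T2 p q = T2 p' q')
    (h3 : T3 p q = T3 p' q') : (p' = p ∧ q' = q) ∨ (p' = -p ∧ q' = -q) := by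
  have key : ∀ p q : Hq, Quaternion.normSq p + Quaternion.normSq q = 1 →
      (T0 p q) ^ 2 + 4 * Quaternion.normSq (T1 p q) = (Real.exp (GG p q qj).2.1) ^ 2 := by
    intro p q h
    rw [T0, T1, Quaternion.normSq_smul, normSq_a]
    have : Quaternion.normSq q = 1 - Quaternion.normSq p := by linarith
    rw [this]
    ring
  have ht : Real.exp (GG p q qj).2.1 = Real.exp (GG p' q' qj).2.1 := by
    have := key p q h
    rw [h0, h1, key p' q' h'] at this
    exact ((pow_left_inj₀ (Real.exp_pos _).le (Real.exp_pos _).le two_ne_zero).1 this).symm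
  have hn : Quaternion.normSq p - Quaternion.normSq q =
      Quaternion.normSq p' - Quaternion.normSq q' := by
    rw [T0, T0, ht] at h0
    exact mul_left_cancel₀ (Real.exp_pos _).ne' h0
  have ha : star q * p = star q' * p' := by
    rw [T1, T1, ht] at h1
    exact smul_right_injective _ (Real.exp_pos _).ne' h1
  have hp : Quaternion.normSq p = Quaternion.normSq p' := by linarith
  have hq : Quaternion.normSq q = Quaternion.normSq q' := by linarith
  obtain ⟨g, hg, rfl, rfl⟩ := exists_g h hp hq ha
  -- u and s
  have hU : ∀ p q : Hq, Quaternion.normSq p + Quaternion.normSq q = 1 →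
      (Quaternion.normSq p) ^ 2 • T2 p q + star (star q * p) * T3 p q * (star q * p) =
        ((Quaternion.normSq p) ^ 2 + (Quaternion.normSq q) ^ 2) • UU p q := by
    intro p q h
    rw [T2, T3, mul_add, add_mul, (UV_rel p q).2, (GG_rel (dom_sphere h) qj).2]
    module
  have hV : ∀ p q : Hq, Quaternion.normSq p + Quaternion.normSq q = 1 →
      (Quaternion.normSq q) ^ 2 • T3 p q + (star q * p) * T2 p q * star (star q * p) =
        ((Quaternion.normSq p) ^ 2 + (Quaternion.normSq q) ^ 2) • VV p q := by
    intro p q h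
    rw [T2, T3, mul_sub, sub_mul, (UV_rel p q).1, (GG_rel (dom_sphere h) qj).1]
    module
  have eU : UU p q = UU (g * p) (g * q) := by
    have := hU p q h
    rw [h2, h3, ha, hp, hq, hU _ _ h'] at this
    exact (smul_right_injective _ (np_pos h').ne' this).symm
  have eV : VV p q = VV (g * p) (g * q) := by
    have := hV p q h
    rw [h2, h3, ha, hp, hq, hV _ _ h'] at this
    exact (smul_right_injective _ (np_pos h').ne' this).symm
  have eX : (GG p q qj).2.2.1 = (GG (g * p) (g * q) qj).2.2.1 := by
    rw [T2, T2, eU] at h2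
    exact sub_right_injective h2
  have eY : (GG p q qj).2.2.2 = (GG (g * p) (g * q) qj).2.2.2 := by
    rw [T3, T3, eV] at h3
    exact add_left_cancel h3
  have expand : ∀ r : Hq, star (g * r) * qi * (g * r) = star r * (star g * qi * g) * r := by
    intro r
    simp only [star_mul, mul_assoc]
  have hs2 : ∀ (r : Hq) (s s' : ℝ), r ≠ 0 → Real.exp s • (star r * qi * r) =
      Real.exp s' • (star (g * r) * qi * (g * r)) → s = s' ∧ star g * qi * g = qi := by
    intro r s s' hr e
    have hs : s = s' := by
      have e2 := congrArg Quaternion.normSq e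
      simp only [Quaternion.normSq_smul, map_mul, Quaternion.normSq_star, hg, normSq_qi,
        one_mul, mul_one] at e2
      have nr := Quaternion.normSq_ne_zero.2 hr
      have e3 := mul_right_cancel₀ (mul_ne_zero nr nr) e2
      have e4 := (pow_left_inj₀ (Real.exp_pos _).le (Real.exp_pos _).le two_ne_zero).1 e3
      exact Real.exp_injective e4
    refine ⟨hs, ?_⟩
    rw [hs] at e
    have e2 := smul_right_injective _ (Real.exp_pos _).ne' e
    rw [expand] at e2
    have e3 := mul_right_cancel₀ hr e2
    exact (mul_left_cancel₀ (star_ne_zero.2 hr) e3).symm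
  have hsg : (GG p q qj).1 = (GG (g * p) (g * q) qj).1 ∧ star g * qi * g = qi := by
    by_cases hp0 : p = 0
    · have hq0 : q ≠ 0 := by
        rintro rfl
        simp [hp0] at h
      exact hs2 q _ _ hq0 eV
    · exact hs2 p _ _ hp0 eU
  obtain ⟨hs, hgi⟩ := hsg
  have eG : GG p q qj = GG (g * p) (g * q) qj :=
    Prod.ext hs (Prod.ext (Real.exp_injective ht) (Prod.ext eX eY))
  obtain ⟨gJ, gK⟩ := comm_form hgi hg
  have gm : g = mk4 g.re g.imI 0 0 := hq_ext rfl rfl gJ gK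
  have hcs : g.re ^ 2 + g.imI ^ 2 = 1 := by
    rw [Quaternion.normSq_def', gJ, gK] at hg
    linarith
  rw [GG_rot hg hgi, gm, rot_j, GG_lin] at eG
  have := GG_jk h (α := g.re ^ 2 - g.imI ^ 2 - 1) (β := -2 * g.re * g.imI) (by
    have e := sub_eq_zero.2 eG.symm
    rw [← e]
    module)
  have hI : g.imI = 0 := by nlinarith [this.1, sq_nonneg g.imI]
  have hre : (g.re - 1) * (g.re + 1) = 0 := by rw [hI] at hcs; linarith
  rcases mul_eq_zero.1 hre with e | e
  · left
    have : g = 1 := hq_ext (by simp; linarith) (by simpa) (by simpa) (by simpa)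
    simp [this]
  · right
    have : g = -1 := hq_ext (by simp; linarith) (by simpa) (by simpa) (by simpa)
    simp [this]

lemma GG_even (p q : Hq) : GG (-p) (-q) qj = GG p q qj := by
  have := GG_rot (g := -1) (by simp) (by simp) p q qj
  simpa using this


lemma hd_congr {V : Type*} [NormedAddCommGroup V] [NormedSpace ℝ V] {f g : ℝ → V} {f' g' : V}
    {x : ℝ} (h : HasDerivAt f f' x) (h1 : ∀ y, g y = f y) (h2 : g' = f') : HasDerivAt g g' x := by
  have : g = f := funext h1
  rw [this, h2]; exact h

open Filter Topology in
lemma conjDeriv {a X Y : ℝ → Hq} {c : ℝ → ℝ} {X' Y' : Hq}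
    (ha : HasDerivAt a 0 0) (hX : HasDerivAt X X' 0) (hY : HasDerivAt Y Y' 0)
    (hc : HasDerivAt c 0 0)
    (h : ∀ᶠ ε in 𝓝 (0 : ℝ), a ε * X ε * star (a ε) = c ε • Y ε) :
    a 0 * X' * star (a 0) = c 0 • Y' := by
  have hs : HasDerivAt (fun ε => star (a ε)) (star (0 : Hq)) 0 :=
    starHL.hasFDerivAt.comp_hasDerivAt (0 : ℝ) ha
  have h1 := (ha.mul hX).mul hs
  have h2 := hc.smul hY
  have h3 := h1.congr_of_eventuallyEq (f₁ := c • Y) (by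
    filter_upwards [h] with ε hε
    exact hε.symm)
  have := h3.unique h2
  simpa using this

lemma normSq_deriv {P : ℝ → Hq} {P' : Hq} (h : HasDerivAt P P' 0) :
    HasDerivAt (fun ε => Quaternion.normSq (P ε)) (2 * (star (P 0) * P').re) 0 := by
  have hs : HasDerivAt (fun ε => star (P ε)) (star P') 0 :=
    starHL.hasFDerivAt.comp_hasDerivAt (0 : ℝ) h
  have h1 : HasDerivAt (fun ε => (P ε * star (P ε)).re) _ 0 :=
    reL.hasFDerivAt.comp_hasDerivAt (0 : ℝ) (h.mul hs)
  simp only [Quaternion.normSq_def]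
  convert h1 using 1
  change _ = (_ : Hq).re
  simp
  ring

lemma step_one {p q dp dq : Hq} {t' : ℝ} (h : Quaternion.normSq p + Quaternion.normSq q = 1)
    (ht : (star p * dp).re + (star q * dq).re = 0)
    (h0 : t' * (Quaternion.normSq p - Quaternion.normSq q) +
      (2 * (star p * dp).re - 2 * (star q * dq).re) = 0)
    (h1 : t' • (star q * p) + (star dq * p + star q * dp) = 0) :
    t' = 0 ∧ (star p * dp).re = 0 ∧ (star q * dq).re = 0 ∧ star dq * p + star q * dp = 0 := by
  set n := Quaternion.normSq p - Quaternion.normSq q with hn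
  set r := (star p * dp).re with hr
  have hr2 : (star q * dq).re = -r := by linarith
  have e1 : (star (star q * p) * (star dq * p + star q * dp)).re =
      Quaternion.normSq p * (star q * dq).re + Quaternion.normSq q * (star p * dp).re := by
    simp [Quaternion.normSq_def']
    ring
  have e2 : (star (star q * p) * (star q * p)).re =
      Quaternion.normSq q * Quaternion.normSq p := by
    rw [← normSq_a, Quaternion.star_mul_self]; simp
  have e3 := congrArg (fun z => (star (star q * p) * z).re) h1
  simp only [mul_add (star (star q * p)) (t' • (star q * p)), Quaternion.re_add, mul_smul_comm,
    Quaternion.re_smul, mul_zero] at e3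
  rw [e1, e2, hr2, ← hr] at e3
  rw [hr2] at h0
  have hq : Quaternion.normSq q = 1 - Quaternion.normSq p := by linarith
  simp only [hn, hq, Quaternion.re_zero, smul_eq_mul] at e3 h0
  have t0 : t' = 0 := by
    linear_combination (2 * Quaternion.normSq p - 1) * h0 + 4 * e3
  rw [t0] at h0 h1
  have r0 : r = 0 := by linarith
  refine ⟨t0, r0, by rw [hr2, r0, neg_zero], by simpa using h1⟩

lemma exists_eta {p q dp dq : Hq} (h : Quaternion.normSq p + Quaternion.normSq q = 1)
    (hp : (star p * dp).re = 0) (hq : (star q * dq).re = 0)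
    (ha : star dq * p + star q * dp = 0) :
    ∃ η : Hq, star η = -η ∧ dp = η * p ∧ dq = η * q := by
  have aux : ∀ p q dp dq : Hq, p ≠ 0 → (star p * dp).re = 0 → star dq * p + star q * dp = 0 →
      ∃ η : Hq, star η = -η ∧ dp = η * p ∧ dq = η * q := by
    intro p q dp dq hp0 hp ha
    have n0 := Quaternion.normSq_ne_zero.2 hp0
    have sk : p * star dp = - (dp * star p) := by
      simp at hp
      apply hq_ext <;> simp <;> linarith
    have ha' : star p * dq = - (star dp * q) := by
      have := congrArg star ha
      simp at this
      exact eq_neg_of_add_eq_zero_left this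
    refine ⟨(Quaternion.normSq p)⁻¹ • (dp * star p), ?_, ?_, ?_⟩
    · rw [Quaternion.star_smul, star_mul, star_star, sk]; simp
    · rw [smul_mul_assoc, mul_assoc, Quaternion.star_mul_self, Quaternion.mul_coe_eq_smul,
        smul_smul, inv_mul_cancel₀ n0, one_smul]
    · have : dp * star p * q = Quaternion.normSq p • dq := by
        rw [← neg_neg (dp * star p), ← sk, neg_mul, mul_assoc, ← mul_neg, ← ha', ← mul_assoc,
          Quaternion.self_mul_star, Quaternion.coe_mul_eq_smul]
      rw [smul_mul_assoc, this, smul_smul, inv_mul_cancel₀ n0, one_smul]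
  by_cases hp0 : p = 0
  · have hq0 : q ≠ 0 := by
      rintro rfl
      simp [hp0] at h
    obtain ⟨η, h1, h2, h3⟩ := aux q p dq dp hq0 hq (by
      have := congrArg star ha
      simp only [star_add, star_mul, star_star, star_zero] at this
      rw [add_comm] at this
      exact this)
    exact ⟨η, h1, h3, h2⟩
  · exact aux p q dp dq hp0 hp ha

lemma step_three {r η : Hq} {E s' : ℝ} (hE : E ≠ 0) (hr : r ≠ 0) (hη : star η = -η)
    (h : E • (star (η * r) * qi * r + star r * qi * (η * r)) +
      (E * s') • (star r * qi * r) = 0) :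
    s' = 0 ∧ η = η.imI • qi := by
  have e : star r * (E • (qi * η - η * qi + s' • qi)) * r = 0 := by
    rw [← h, star_mul, hη]
    simp only [mul_smul_comm, smul_mul_assoc, mul_add, mul_sub, add_mul, sub_mul, mul_assoc,
      mul_neg, neg_mul]
    module
  have e1 := (mul_eq_zero.1 ((mul_eq_zero.1 e).resolve_right hr)).resolve_left (star_ne_zero.2 hr)
  have e2 := (smul_eq_zero.1 e1).resolve_left hE
  have cI := congrArg (fun q : Hq => q.imI) e2
  have cJ := congrArg (fun q : Hq => q.imJ) e2
  have cK := congrArg (fun q : Hq => q.imK) e2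
  have cR := congrArg (fun q : Hq => q.re) hη
  simp [qi] at cI cJ cK cR
  refine ⟨by linarith, ?_⟩
  apply hq_ext <;> simp [qi] <;> linarith

lemma curve_deriv {p q : Hq} (h : Quaternion.normSq p + Quaternion.normSq q = 1)
    {L : Hq × Hq →L[ℝ] WW} (hL : HasFDerivAt (fun x : Hq × Hq => GG x.1 x.2 qj) L (p, q)) :
    L (qi * p, qi * q) = (-2 : ℝ) • GG p q qk := by
  have hg : HasDerivAt (fun θ : ℝ => mk4 (Real.cos θ) (Real.sin θ) 0 0) qi 0 := by
    have h1 := ((Real.hasDerivAt_cos 0).smul_const (mk4 1 0 0 0)).add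
      ((Real.hasDerivAt_sin 0).smul_const (mk4 0 1 0 0))
    refine hd_congr h1 ?_ ?_
    · intro θ
      rw [mk4_eq]; simp
    · apply hq_ext <;> simp [qi]
  have hc : HasDerivAt (fun θ : ℝ => (mk4 (Real.cos θ) (Real.sin θ) 0 0 * p,
      mk4 (Real.cos θ) (Real.sin θ) 0 0 * q)) (qi * p, qi * q) 0 :=
    (hg.mul_const p).prodMk (hg.mul_const q)
  have one : mk4 1 0 0 0 = (1 : Hq) := by apply hq_ext <;> simp
  have hL' : HasFDerivAt (fun x : Hq × Hq => GG x.1 x.2 qj) L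
      (mk4 (Real.cos 0) (Real.sin 0) 0 0 * p, mk4 (Real.cos 0) (Real.sin 0) 0 0 * q) := by
    rw [Real.cos_zero, Real.sin_zero, one, one_mul, one_mul]; exact hL
  have h1 := hL'.comp_hasDerivAt (0 : ℝ) hc
  have h2 : HasDerivAt (fun θ : ℝ => ((Real.cos θ) ^ 2 - (Real.sin θ) ^ 2) • GG p q qj +
      (-2 * Real.cos θ * Real.sin θ) • GG p q qk) ((-2 : ℝ) • GG p q qk) 0 := by
    have c := Real.hasDerivAt_cos 0
    have s := Real.hasDerivAt_sin 0
    have := (((c.pow 2).sub (s.pow 2)).smul_const (GG p q qj)).add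
      (((c.const_mul (-2)).mul s).smul_const (GG p q qk))
    exact hd_congr this (fun θ => rfl) (by simp)
  refine h1.unique ?_
  refine hd_congr h2 (fun θ => ?_) rfl
  have hcs := Real.cos_sq_add_sin_sq θ
  simp only [Function.comp]
  rw [GG_rot (rot_n hcs) (rot_i hcs), rot_j, GG_lin]


open Filter Topology in
lemma T_imm {p q dp dq : Hq} (h : Quaternion.normSq p + Quaternion.normSq q = 1)
    (ht : (star p * dp).re + (star q * dq).re = 0)
    (d0 : HasDerivAt (fun ε : ℝ => T0 (p + ε • dp) (q + ε • dq)) 0 0)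
    (d1 : HasDerivAt (fun ε : ℝ => T1 (p + ε • dp) (q + ε • dq)) 0 0)
    (d2 : HasDerivAt (fun ε : ℝ => T2 (p + ε • dp) (q + ε • dq)) 0 0)
    (d3 : HasDerivAt (fun ε : ℝ => T3 (p + ε • dp) (q + ε • dq)) 0 0) : dp = 0 ∧ dq = 0 := by
  have line : ∀ r dr : Hq, HasDerivAt (fun ε : ℝ => r + ε • dr) dr 0 := by
    intro r dr
    exact hd_congr (((hasDerivAt_id (0 : ℝ)).smul_const dr).const_add r) (fun _ => rfl) (by simp)
  have hP := line p dp
  have hQ := line q dq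
  have hsP : HasDerivAt (fun ε : ℝ => star (p + ε • dp)) (star dp) 0 :=
    starHL.hasFDerivAt.comp_hasDerivAt (0 : ℝ) hP
  have hsQ : HasDerivAt (fun ε : ℝ => star (q + ε • dq)) (star dq) 0 :=
    starHL.hasFDerivAt.comp_hasDerivAt (0 : ℝ) hQ
  have hγ : HasDerivAt (fun ε : ℝ => (p + ε • dp, q + ε • dq)) (dp, dq) 0 := hP.prodMk hQ
  have zp : p + (0 : ℝ) • dp = p := by simp
  have zq : q + (0 : ℝ) • dq = q := by simp
  have hL : HasFDerivAt (fun x : Hq × Hq => GG x.1 x.2 qj) _ (p, q) :=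
    ((cd_GG h (m := qj) rfl rfl).differentiableAt (by simp)).hasFDerivAt
  set L := fderiv ℝ (fun x : Hq × Hq => GG x.1 x.2 qj) (p, q) with hLdef
  have hL0 : HasFDerivAt (fun x : Hq × Hq => GG x.1 x.2 qj) L
      (p + (0 : ℝ) • dp, q + (0 : ℝ) • dq) := by rw [zp, zq]; exact hL
  have hG : HasDerivAt (fun ε : ℝ => GG (p + ε • dp) (q + ε • dq) qj) (L (dp, dq)) 0 := by
    have := HasFDerivAt.comp_hasDerivAt (f := fun ε : ℝ => (p + ε • dp, q + ε • dq)) (0 : ℝ) hL0 hγ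
    exact this
  rcases hW : L (dp, dq) with ⟨s', t', X', Y'⟩
  rw [hW] at hG
  have hs : HasDerivAt (fun ε : ℝ => (GG (p + ε • dp) (q + ε • dq) qj).1) s' 0 :=
    (ContinuousLinearMap.fst ℝ ℝ (ℝ × Hq × Hq)).hasFDerivAt.comp_hasDerivAt (0 : ℝ) hG
  have hG2 : HasDerivAt (fun ε : ℝ => (GG (p + ε • dp) (q + ε • dq) qj).2) (t', X', Y') 0 :=
    (ContinuousLinearMap.snd ℝ ℝ (ℝ × Hq × Hq)).hasFDerivAt.comp_hasDerivAt (0 : ℝ) hG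
  have htt : HasDerivAt (fun ε : ℝ => (GG (p + ε • dp) (q + ε • dq) qj).2.1) t' 0 :=
    (ContinuousLinearMap.fst ℝ ℝ (Hq × Hq)).hasFDerivAt.comp_hasDerivAt (0 : ℝ) hG2
  have hG3 : HasDerivAt (fun ε : ℝ => (GG (p + ε • dp) (q + ε • dq) qj).2.2) (X', Y') 0 :=
    (ContinuousLinearMap.snd ℝ ℝ (Hq × Hq)).hasFDerivAt.comp_hasDerivAt (0 : ℝ) hG2
  have hX : HasDerivAt (fun ε : ℝ => (GG (p + ε • dp) (q + ε • dq) qj).2.2.1) X' 0 :=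
    (ContinuousLinearMap.fst ℝ Hq Hq).hasFDerivAt.comp_hasDerivAt (0 : ℝ) hG3
  have hY : HasDerivAt (fun ε : ℝ => (GG (p + ε • dp) (q + ε • dq) qj).2.2.2) Y' 0 :=
    (ContinuousLinearMap.snd ℝ Hq Hq).hasFDerivAt.comp_hasDerivAt (0 : ℝ) hG3
  have hnp := normSq_deriv hP
  have hnq := normSq_deriv hQ
  have ha : HasDerivAt (fun ε : ℝ => star (q + ε • dq) * (p + ε • dp))
      (star dq * p + star q * dp) 0 :=
    hd_congr (hsQ.mul hP) (fun _ => rfl) (by rw [zp, zq])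
  -- step 1
  have E0 := (Real.exp_pos (GG p q qj).2.1).ne'
  have s1 : t' * (Quaternion.normSq p - Quaternion.normSq q) +
      (2 * (star p * dp).re - 2 * (star q * dq).re) = 0 := by
    have := d0.unique (hd_congr (htt.exp.mul (hnp.sub hnq)) (fun _ => rfl) rfl)
    simp only [zp, zq, Pi.sub_apply] at this
    have e : Real.exp (GG p q qj).2.1 * (t' * (Quaternion.normSq p - Quaternion.normSq q) +
      (2 * (star p * dp).re - 2 * (star q * dq).re)) = 0 := by linarith
    exact (mul_eq_zero.1 e).resolve_left E0
  have s2 : t' • (star q * p) + (star dq * p + star q * dp) = 0 := by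
    have := d1.unique (hd_congr (htt.exp.smul ha) (fun _ => rfl) rfl)
    simp only [zp, zq] at this
    have e : Real.exp (GG p q qj).2.1 •
      (t' • (star q * p) + (star dq * p + star q * dp)) = 0 := by rw [this]; module
    exact (smul_eq_zero.1 e).resolve_left E0
  obtain ⟨t0, rp, rq, a0⟩ := step_one h ht s1 s2
  obtain ⟨η, hη, hdp, hdq⟩ := exists_eta h rp rq a0
  -- step 2
  rw [a0] at ha
  have has : HasDerivAt (fun ε : ℝ => star (star (q + ε • dq) * (p + ε • dp))) 0 0 :=
    hd_congr (starHL.hasFDerivAt.comp_hasDerivAt (0 : ℝ) ha) (fun _ => rfl) (by simp)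
  have hcp : HasDerivAt (fun ε : ℝ => (Quaternion.normSq (p + ε • dp)) ^ 2) 0 0 :=
    hd_congr (hnp.pow 2) (fun _ => rfl) (by simp only [zp, rp]; simp)
  have hcq : HasDerivAt (fun ε : ℝ => (Quaternion.normSq (q + ε • dq)) ^ 2) 0 0 :=
    hd_congr (hnq.pow 2) (fun _ => rfl) (by simp only [zq, rq]; simp)
  have hE := hs.exp
  have hU := hE.smul ((hsP.mul_const qi).mul hP)
  have hV := hE.smul ((hsQ.mul_const qi).mul hQ)
  have hU1 : HasDerivAt (fun ε : ℝ => UU (p + ε • dp) (q + ε • dq)) X' 0 :=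
    hd_congr (d2.add hX) (fun ε => by simp [T2]) (by simp)
  have hV1 : HasDerivAt (fun ε : ℝ => VV (p + ε • dp) (q + ε • dq)) (-Y') 0 :=
    hd_congr (d3.sub hY) (fun ε => by simp [T3]) (by simp)
  have hev : ∀ᶠ ε in 𝓝 (0 : ℝ), Dom (p + ε • dp) (q + ε • dq) := by
    have hc : Tendsto (fun ε : ℝ => (p + ε • dp, q + ε • dq)) (𝓝 0) (𝓝 (p, q)) := by
      have := hγ.continuousAt.tendsto
      rwa [zp, zq] at this
    exact hc.eventually (dom_ev h)
  have r1 := conjDeriv ha hX hY hcq (by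
    filter_upwards [hev] with ε hε
    exact (GG_rel hε qj).1)
  have r2 := conjDeriv has hY hX hcp (by
    filter_upwards [hev] with ε hε
    rw [star_star]
    exact (GG_rel hε qj).2)
  have r3 := conjDeriv ha hU1 hV1 hcp (Eventually.of_forall fun ε => (UV_rel _ _).1)
  have r4 := conjDeriv has hV1 hU1 hcq (Eventually.of_forall fun ε => by
    rw [star_star]; exact (UV_rel _ _).2)
  simp only [zp, zq, star_star] at r1 r2 r3 r4
  have hY0 : Y' = 0 := by
    have e : ((Quaternion.normSq p) ^ 2 + (Quaternion.normSq q) ^ 2) • Y' = 0 := by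
      have := r1.symm.trans r3
      rw [add_smul, this]; module
    exact (smul_eq_zero.1 e).resolve_left (np_pos h).ne'
  have hX0 : X' = 0 := by
    have e : ((Quaternion.normSq p) ^ 2 + (Quaternion.normSq q) ^ 2) • X' = 0 := by
      rw [mul_neg, neg_mul, r2] at r4
      rw [add_smul, ← r4]; module
    exact (smul_eq_zero.1 e).resolve_left (np_pos h).ne'
  -- step 3
  have hsη : s' = 0 ∧ η = η.imI • qi := by
    have E1 := (Real.exp_pos (GG p q qj).1).ne'
    by_cases hp0 : p = 0
    · have hq0 : q ≠ 0 := by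
        rintro rfl
        simp [hp0] at h
      have := hV1.unique (hd_congr hV (fun _ => rfl) rfl)
      simp only [zp, zq, hY0, neg_zero, Pi.mul_apply] at this
      rw [hdq] at this
      exact step_three E1 hq0 hη this.symm
    · have := hU1.unique (hd_congr hU (fun _ => rfl) rfl)
      simp only [zp, zq, hX0, Pi.mul_apply] at this
      rw [hdp] at this
      exact step_three E1 hp0 hη this.symm
  obtain ⟨s0, hηi⟩ := hsη
  -- step 4
  have hc := curve_deriv h hL
  have e1 : (dp, dq) = η.imI • (qi * p, qi * q) := by
    rw [Prod.smul_mk, ← smul_mul_assoc, ← smul_mul_assoc, ← hηi, ← hdp, ← hdq]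
  rw [e1, map_smul, hc, s0, t0, hX0, hY0, smul_smul] at hW
  have := (GG_jk h (α := 0) (β := η.imI * (-2)) (by
    rw [zero_smul, zero_add, hW]; rfl)).2
  have z : η.imI = 0 := by linarith
  rw [z, zero_smul] at hηi
  rw [hdp, hdq, hηi]
  simp


abbrev E8 := EuclideanSpace ℝ (Fin 8)
abbrev E11 := EuclideanSpace ℝ (Fin 11)

noncomputable def PL : E8 →ₗ[ℝ] Hq where
  toFun x := mk4 (x 0) (x 1) (x 2) (x 3)
  map_add' x y := by apply hq_ext <;> simp
  map_smul' r x := by apply hq_ext <;> simp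

noncomputable def QL : E8 →ₗ[ℝ] Hq where
  toFun x := mk4 (x 4) (x 5) (x 6) (x 7)
  map_add' x y := by apply hq_ext <;> simp
  map_smul' r x := by apply hq_ext <;> simp

lemma PL_apply (x : E8) : PL x = mk4 (x 0) (x 1) (x 2) (x 3) := rfl
lemma QL_apply (x : E8) : QL x = mk4 (x 4) (x 5) (x 6) (x 7) := rfl

lemma inner_PQ (x y : E8) : (star (PL x) * PL y).re + (star (QL x) * QL y).re = ⟪x, y⟫ := by
  rw [PiLp.inner_apply]
  simp [Fin.sum_univ_eight, PL_apply, QL_apply]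
  ring

lemma sphere_PQ (x : E8) (hx : ‖x‖ = 1) :
    Quaternion.normSq (PL x) + Quaternion.normSq (QL x) = 1 := by
  have h := inner_PQ x x
  rw [real_inner_self_eq_norm_sq, hx, Quaternion.star_mul_self, Quaternion.star_mul_self] at h
  simpa using h

lemma PQ_ext {x y : E8} (hp : PL x = PL y) (hq : QL x = QL y) : x = y := by
  rw [PL_apply, PL_apply] at hp
  rw [QL_apply, QL_apply] at hq
  have a0 := congrArg (fun q : Hq => q.re) hp
  have a1 := congrArg (fun q : Hq => q.imI) hp
  have a2 := congrArg (fun q : Hq => q.imJ) hp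
  have a3 := congrArg (fun q : Hq => q.imK) hp
  have b0 := congrArg (fun q : Hq => q.re) hq
  have b1 := congrArg (fun q : Hq => q.imI) hq
  have b2 := congrArg (fun q : Hq => q.imJ) hq
  have b3 := congrArg (fun q : Hq => q.imK) hq
  simp at a0 a1 a2 a3 b0 b1 b2 b3
  ext i
  fin_cases i <;> assumption

noncomputable def FF (x : E8) : E11 :=
  !₂[T0 (PL x) (QL x),
    (T1 (PL x) (QL x)).re, (T1 (PL x) (QL x)).imI, (T1 (PL x) (QL x)).imJ, (T1 (PL x) (QL x)).imK,
    (T2 (PL x) (QL x)).imI, (T2 (PL x) (QL x)).imJ, (T2 (PL x) (QL x)).imK,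
    (T3 (PL x) (QL x)).imI, (T3 (PL x) (QL x)).imJ, (T3 (PL x) (QL x)).imK]

/-- Recovering `T₀, …, T₃` linearly from `FF`. -/
noncomputable def R1 : E11 →ₗ[ℝ] Hq where
  toFun x := mk4 (x 1) (x 2) (x 3) (x 4)
  map_add' x y := by apply hq_ext <;> simp
  map_smul' r x := by apply hq_ext <;> simp
noncomputable def R2 : E11 →ₗ[ℝ] Hq where
  toFun x := mk4 0 (x 5) (x 6) (x 7)
  map_add' x y := by apply hq_ext <;> simp
  map_smul' r x := by apply hq_ext <;> simp
noncomputable def R3 : E11 →ₗ[ℝ] Hq where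
  toFun x := mk4 0 (x 8) (x 9) (x 10)
  map_add' x y := by apply hq_ext <;> simp
  map_smul' r x := by apply hq_ext <;> simp
noncomputable def R0 : E11 →ₗ[ℝ] ℝ where
  toFun x := x 0
  map_add' x y := by simp
  map_smul' r x := by simp

lemma R0_FF (x : E8) : R0 (FF x) = T0 (PL x) (QL x) := rfl
lemma R1_FF (x : E8) : R1 (FF x) = T1 (PL x) (QL x) := rfl
lemma R2_FF (x : E8) : R2 (FF x) = T2 (PL x) (QL x) :=
  hq_ext (T23_re _ _).1.symm rfl rfl rfl
lemma R3_FF (x : E8) : R3 (FF x) = T3 (PL x) (QL x) :=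
  hq_ext (T23_re _ _).2.symm rfl rfl rfl

lemma FF_even (x : E8) : FF (-x) = FF x := by
  simp only [FF, map_neg, T0, T1, T2, T3, UU, VV, GG_even, Quaternion.normSq_neg, star_neg,
    neg_mul, mul_neg, neg_neg]

lemma FF_inj {x y : E8} (hx : ‖x‖ = 1) (hy : ‖y‖ = 1) (h : FF x = FF y) : x = y ∨ x = -y := by
  have := T_inj (sphere_PQ y hy) (sphere_PQ x hx)
    (by rw [← R0_FF, ← R0_FF, h]) (by rw [← R1_FF, ← R1_FF, h])
    (by rw [← R2_FF, ← R2_FF, h]) (by rw [← R3_FF, ← R3_FF, h])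
  rcases this with ⟨h1, h2⟩ | ⟨h1, h2⟩
  · exact Or.inl (PQ_ext h1 h2)
  · exact Or.inr (PQ_ext (by rw [h1, map_neg]) (by rw [h2, map_neg]))

lemma cd_FF {x : E8} (hx : ‖x‖ = 1) : ContDiffAt ℝ ∞ FF x := by
  have hP : ContDiffAt ℝ ∞ (fun z => PL z) x := (LinearMap.toContinuousLinearMap PL).contDiff.contDiffAt
  have hQ : ContDiffAt ℝ ∞ (fun z => QL z) x := (LinearMap.toContinuousLinearMap QL).contDiff.contDiffAt
  have hPQ : ContDiffAt ℝ ∞ (fun z => (PL z, QL z)) x := hP.prodMk hQ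
  have hG : ContDiffAt ℝ ∞ (fun z => GG (PL z) (QL z) qj) x := by
    have := ContDiffAt.comp (f := fun z => (PL z, QL z)) x
      (cd_GG (sphere_PQ x hx) (m := qj) rfl rfl) hPQ
    exact this
  have hs := hG.fst
  have ht := hG.snd.fst
  have hX := hG.snd.snd.fst
  have hY := hG.snd.snd.snd
  have h0 : ContDiffAt ℝ ∞ (fun z => T0 (PL z) (QL z)) x :=
    ht.exp.mul ((cd_normSq hP).sub (cd_normSq hQ))
  have h1 : ContDiffAt ℝ ∞ (fun z => T1 (PL z) (QL z)) x := ht.exp.smul ((cd_star hQ).mul hP)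
  have h2 : ContDiffAt ℝ ∞ (fun z => T2 (PL z) (QL z)) x :=
    (hs.exp.smul (((cd_star hP).mul contDiffAt_const).mul hP)).sub hX
  have h3 : ContDiffAt ℝ ∞ (fun z => T3 (PL z) (QL z)) x :=
    (hs.exp.smul (((cd_star hQ).mul contDiffAt_const).mul hQ)).add hY
  rw [contDiffAt_euclidean]
  intro i
  fin_cases i
  · exact h0
  · exact cd_re h1
  · exact cd_imI h1
  · exact cd_imJ h1
  · exact cd_imK h1
  · exact cd_imI h2
  · exact cd_imJ h2
  · exact cd_imK h2
  · exact cd_imI h3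
  · exact cd_imJ h3
  · exact cd_imK h3

lemma FF_imm {x y : E8} (hx : ‖x‖ = 1) (hy : ⟪x, y⟫ = 0) (h : fderiv ℝ FF x y = 0) : y = 0 := by
  have hF : HasFDerivAt FF (fderiv ℝ FF x) x :=
    ((cd_FF hx).differentiableAt (by simp)).hasFDerivAt
  have hl : HasDerivAt (fun ε : ℝ => x + ε • y) y 0 :=
    hd_congr (((hasDerivAt_id (0 : ℝ)).smul_const y).const_add x) (fun _ => rfl) (by simp)
  have hF0 : HasFDerivAt FF (fderiv ℝ FF x) (x + (0 : ℝ) • y) := by simpa using hF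
  have hd := HasFDerivAt.comp_hasDerivAt (f := fun ε : ℝ => x + ε • y) (0 : ℝ) hF0 hl
  rw [h] at hd
  have k : ∀ {V : Type} [NormedAddCommGroup V] [NormedSpace ℝ V] (R : E11 →ₗ[ℝ] V),
      HasDerivAt (fun ε : ℝ => R (FF (x + ε • y))) 0 0 := by
    intro V _ _ R
    have := (LinearMap.toContinuousLinearMap R).hasFDerivAt.comp_hasDerivAt (0 : ℝ) hd
    exact hd_congr this (fun _ => rfl) (by simp)
  have k0 := k R0
  have k1 := k R1
  have k2 := k R2
  have k3 := k R3
  simp only [R0_FF, R1_FF, R2_FF, R3_FF, map_add, map_smul] at k0 k1 k2 k3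
  have := T_imm (sphere_PQ x hx) (by rw [inner_PQ, hy]) k0 k1 k2 k3
  exact PQ_ext (by rw [this.1, map_zero]) (by rw [this.2, map_zero])


end Construction

/-- There is a smooth embedding of `ℝP⁷ = S⁷/{±1}` into `ℝ¹¹`, witnessed by a smooth map
on the sphere `S⁷` which is antipodally invariant, separates antipodal classes, and is an
immersion. -/
theorem rp7_smoothly_embeds_in_R11 :
    ∃ f : sphere (0 : EuclideanSpace ℝ (Fin 8)) 1 → EuclideanSpace ℝ (Fin 11),
      ContMDiff (𝓡 7) 𝓘(ℝ, EuclideanSpace ℝ (Fin 11)) (⊤ : ℕ∞) f ∧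
      (∀ x : sphere (0 : EuclideanSpace ℝ (Fin 8)) 1, f (-x) = f x) ∧
      (∀ x y : sphere (0 : EuclideanSpace ℝ (Fin 8)) 1, f x = f y → x = y ∨ x = -y) ∧
      (∀ x : sphere (0 : EuclideanSpace ℝ (Fin 8)) 1,
        Function.Injective (mfderiv (𝓡 7) 𝓘(ℝ, EuclideanSpace ℝ (Fin 11)) f x)) := by
  have hn : ∀ x : sphere (0 : E8) 1, ‖(x : E8)‖ = 1 := fun x => norm_eq_of_mem_sphere x
  refine ⟨fun x => FF x, ?_, ?_, ?_, ?_⟩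
  · intro x
    exact (cd_FF (hn x)).contMDiffAt.comp x (contMDiff_coe_sphere.contMDiffAt)
  · intro x
    exact FF_even x
  · intro x y h
    rcases FF_inj (hn x) (hn y) h with e | e
    · exact Or.inl (Subtype.ext e)
    · exact Or.inr (Subtype.ext e)
  · intro x
    have hc : MDifferentiableAt (𝓡 7) 𝓘(ℝ, E8) ((↑) : sphere (0 : E8) 1 → E8) x :=
      ((contMDiff_coe_sphere (m := 1)).mdifferentiable (by simp)) x
    have hF : MDifferentiableAt 𝓘(ℝ, E8) 𝓘(ℝ, E11) FF (x : E8) :=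
      ((cd_FF (hn x)).differentiableAt (by simp)).mdifferentiableAt
    have e : mfderiv (𝓡 7) 𝓘(ℝ, E11) (fun x : sphere (0 : E8) 1 => FF x) x =
        (fderiv ℝ FF (x : E8)).comp (mfderiv (𝓡 7) 𝓘(ℝ, E8) ((↑) : sphere (0 : E8) 1 → E8) x) := by
      have := mfderiv_comp x hF hc
      rw [mfderiv_eq_fderiv] at this
      exact this
    rw [e]
    refine (injective_iff_map_eq_zero _).2 ?_
    intro v hv
    have hv' : fderiv ℝ FF (x : E8)
      (mfderiv (𝓡 7) 𝓘(ℝ, E8) ((↑) : sphere (0 : E8) 1 → E8) x v) = 0 := hv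
    have hr := range_mfderiv_coe_sphere (n := 7) x
    have hm : (mfderiv (𝓡 7) 𝓘(ℝ, E8) ((↑) : sphere (0 : E8) 1 → E8) x v : E8) ∈
        (Submodule.span ℝ {(x : E8)})ᗮ := by
      rw [← hr]
      exact LinearMap.mem_range_self _ v
    have ho : inner ℝ (x : E8)
        (mfderiv (𝓡 7) 𝓘(ℝ, E8) ((↑) : sphere (0 : E8) 1 → E8) x v : E8) = 0 :=
      (Submodule.mem_orthogonal_singleton_iff_inner_right (𝕜 := ℝ) (E := E8)).1 hm
    have z := FF_imm (hn x) ho hv'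
    apply mfderiv_coe_sphere_injective (n := 7) x
    rw [z]
    exact (map_zero _).symm
end

section
/- There exists a continuous map g from the unit sphere S⁷ = Metric.sphere 0 1 in EuclideanSpace ℝ (Fin 8) to EuclideanSpace ℝ (Fin 11) such that g(−x) = g(x) for every x ∈ S⁷, and the induced map on the quotient space S⁷/∼ (where x ∼ y if and only if x = y or x = −y, with the quotient topology) is a topological embedding (IsEmbedding). In other words, real projective 7-space ℝP⁷ embeds topologically into ℝ¹¹. -/
open Metric

/-- The antipodal equivalence relation on the unit sphere `S⁷ ⊆ ℝ⁸`:
`x ∼ y` iff `x = y` or `x = -y`. -/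
def antipodalSetoid : Setoid (sphere (0 : EuclideanSpace ℝ (Fin 8)) 1) where
  r x y := x = y ∨ x = -y
  iseqv := by
    constructor
    · exact fun x => Or.inl rfl
    · rintro x y (rfl | rfl)
      · exact Or.inl rfl
      · exact Or.inr (neg_neg y).symm
    · rintro x y z (rfl | rfl) (rfl | rfl)
      · exact Or.inl rfl
      · exact Or.inr rfl
      · exact Or.inr rfl
      · exact Or.inl (neg_neg z)

open Complex ComplexConjugate

/-- Uniqueness of the top Takagi vector of a complex symmetric `2 × 2` matrix. -/
theorem takagi_half (a0 a1 b0 b1 c d : ℂ)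
    (h1 : a0 ^ 2 + c * conj a1 ^ 2 = b0 ^ 2 + d * conj b1 ^ 2)
    (h2 : a0 * a1 - c * (conj a0 * conj a1) = b0 * b1 - d * (conj b0 * conj b1))
    (h3 : a1 ^ 2 + c * conj a0 ^ 2 = b1 ^ 2 + d * conj b0 ^ 2) :
    (a0 * conj a0 + a1 * conj a1) * (a0 * conj b0 + a1 * conj b1)
      = (b0 * conj b0 + b1 * conj b1) * (conj a0 * b0 + conj a1 * b1) ∧
    (a0 * conj a0 + a1 * conj a1) * (c * (conj a0 * conj b1 - conj a1 * conj b0))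
      = (b0 * conj b0 + b1 * conj b1) * (a0 * b1 - a1 * b0) ∧
    (b0 * conj b0 + b1 * conj b1) * b0
      = a0 * (a0 * conj b0 + a1 * conj b1) - c * conj a1 * (conj a0 * conj b1 - conj a1 * conj b0) ∧
    (b0 * conj b0 + b1 * conj b1) * b1
      = a1 * (a0 * conj b0 + a1 * conj b1) + c * conj a0 * (conj a0 * conj b1 - conj a1 * conj b0)
    := by
  have r1 : (b0 * conj b0 + b1 * conj b1) * b0
      = a0 * (a0 * conj b0 + a1 * conj b1)
        - c * conj a1 * (conj a0 * conj b1 - conj a1 * conj b0) := by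
    linear_combination (-conj b0) * h1 - conj b1 * h2
  have r2 : (b0 * conj b0 + b1 * conj b1) * b1
      = a1 * (a0 * conj b0 + a1 * conj b1)
        + c * conj a0 * (conj a0 * conj b1 - conj a1 * conj b0) := by
    linear_combination (-conj b0) * h2 - conj b1 * h3
  refine ⟨?_, ?_, r1, r2⟩
  · linear_combination (-conj a0) * r1 - conj a1 * r2
  · linear_combination (-a0) * r2 + a1 * r1

theorem nn_eq (a0 a1 : ℂ) :
    a0 * conj a0 + a1 * conj a1 = ((‖a0‖ ^ 2 + ‖a1‖ ^ 2 : ℝ) : ℂ) := by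
  rw [Complex.mul_conj, Complex.mul_conj, Complex.normSq_eq_norm_sq, Complex.normSq_eq_norm_sq]
  push_cast; ring

theorem nn_zero {a0 a1 : ℂ} (h : ‖a0‖ ^ 2 + ‖a1‖ ^ 2 = 0) : a0 = 0 ∧ a1 = 0 := by
  have h0 : ‖a0‖ ^ 2 = 0 := by nlinarith [sq_nonneg ‖a0‖, sq_nonneg ‖a1‖]
  have h1 : ‖a1‖ ^ 2 = 0 := by nlinarith [sq_nonneg ‖a0‖, sq_nonneg ‖a1‖]
  simpa using And.intro h0 h1

theorem takagi (a0 a1 b0 b1 c d : ℂ) (hc : ‖c‖ < 1) (hd : ‖d‖ < 1)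
    (h1 : a0 ^ 2 + c * conj a1 ^ 2 = b0 ^ 2 + d * conj b1 ^ 2)
    (h2 : a0 * a1 - c * (conj a0 * conj a1) = b0 * b1 - d * (conj b0 * conj b1))
    (h3 : a1 ^ 2 + c * conj a0 ^ 2 = b1 ^ 2 + d * conj b0 ^ 2) :
    (a0 = b0 ∧ a1 = b1) ∨ (a0 = -b0 ∧ a1 = -b1) := by
  obtain ⟨e1, e2, e3, e4⟩ := takagi_half a0 a1 b0 b1 c d h1 h2 h3
  obtain ⟨f1, f2, f3, f4⟩ := takagi_half b0 b1 a0 a1 d c h1.symm h2.symm h3.symm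
  rw [nn_eq, nn_eq] at e1 e2 f2
  rw [nn_eq] at e3 e4 f3 f4
  set N : ℝ := ‖a0‖ ^ 2 + ‖a1‖ ^ 2 with hN
  set M : ℝ := ‖b0‖ ^ 2 + ‖b1‖ ^ 2 with hM
  have N0 : 0 ≤ N := by positivity
  have M0 : 0 ≤ M := by positivity
  rcases N0.eq_or_lt with hN0 | hNp
  · obtain ⟨rfl, rfl⟩ := nn_zero hN0.symm
    simp at e3 e4
    left
    rcases e3 with h | h
    · obtain ⟨rfl, rfl⟩ := nn_zero (by rw [← hM]; exact_mod_cast h)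
      simp
    · subst h
      rcases e4 with h | h
      · obtain ⟨h, rfl⟩ := nn_zero (by rw [← hM]; exact_mod_cast h)
        simp
      · simp [h]
  rcases M0.eq_or_lt with hM0 | hMp
  · obtain ⟨rfl, rfl⟩ := nn_zero hM0.symm
    simp at f3 f4
    have hN' : (N : ℂ) ≠ 0 := by exact_mod_cast hNp.ne'
    left
    exact ⟨f3.resolve_left hNp.ne', f4.resolve_left hNp.ne'⟩
  have hN' : (N : ℂ) ≠ 0 := by exact_mod_cast hNp.ne'
  have hM' : (M : ℂ) ≠ 0 := by exact_mod_cast hMp.ne'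
  have ht : a0 * b1 - a1 * b0 = 0 := by
    by_contra ht
    have hT : conj a0 * conj b1 - conj a1 * conj b0 = conj (a0 * b1 - a1 * b0) := by simp
    have hT' : conj b0 * conj a1 - conj b1 * conj a0 = - conj (a0 * b1 - a1 * b0) := by
      simp; ring
    have ht' : b0 * a1 - b1 * a0 = - (a0 * b1 - a1 * b0) := by ring
    rw [hT] at e2
    rw [hT', ht'] at f2
    have tp : 0 < ‖a0 * b1 - a1 * b0‖ := norm_pos_iff.mpr ht
    have e2n := congrArg norm e2
    have f2n := congrArg norm f2
    simp only [norm_mul, norm_neg, Complex.norm_conj, Complex.norm_real, Real.norm_eq_abs,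
      abs_of_pos hNp, abs_of_pos hMp] at e2n f2n
    have k1 : N * ‖c‖ = M := mul_right_cancel₀ tp.ne' (by linarith)
    have k2 : M * ‖d‖ = N := mul_right_cancel₀ tp.ne' (by linarith)
    nlinarith [mul_pos hNp (sub_pos.mpr hc), mul_pos hMp (sub_pos.mpr hd)]
  set s := conj a0 * b0 + conj a1 * b1 with hs
  have hsc : a0 * conj b0 + a1 * conj b1 = conj s := by simp [hs]
  rw [hsc] at e1
  have q0 : (N : ℂ) * b0 = s * a0 := by
    rw [hN, ← nn_eq]; linear_combination (-conj a1) * ht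
  have q1 : (N : ℂ) * b1 = s * a1 := by
    rw [hN, ← nn_eq]; linear_combination (conj a0) * ht
  have s0 : s ≠ 0 := by
    intro h
    rw [h] at q0 q1
    simp [hN'] at q0 q1
    subst q0 q1
    simp [hM] at hMp
  have e1n := congrArg norm e1
  simp only [norm_mul, Complex.norm_conj, Complex.norm_real, Real.norm_eq_abs,
      abs_of_pos hNp, abs_of_pos hMp] at e1n
  have hNM : N = M := mul_right_cancel₀ (norm_pos_iff.mpr s0).ne' e1n
  rw [← hNM] at e1
  have hreal : conj s = s := mul_left_cancel₀ hN' e1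
  have hs2 : s * s = N * N := by
    have : s * conj s = (N : ℂ) * M := by
      rw [hN, hM, ← nn_eq, ← nn_eq, ← hsc, hs]
      have ht2 : conj a0 * conj b1 - conj a1 * conj b0 = 0 := by
        simpa using congrArg conj ht
      linear_combination (-(conj a0 * conj b1 - conj a1 * conj b0)) * ht
    rw [hreal, ← hNM] at this
    exact this
  rcases mul_self_eq_mul_self_iff.mp hs2 with h | h
  · left
    rw [h] at q0 q1
    exact ⟨(mul_left_cancel₀ hN' q0).symm, (mul_left_cancel₀ hN' q1).symm⟩
  · right
    rw [h] at q0 q1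
    constructor
    · apply mul_left_cancel₀ hN'; linear_combination q0
    · apply mul_left_cancel₀ hN'; linear_combination q1

theorem takagi_coeff {a0 a1 c d : ℂ} (ha : ¬ (a0 = 0 ∧ a1 = 0))
    (h1 : a0 ^ 2 + c * conj a1 ^ 2 = a0 ^ 2 + d * conj a1 ^ 2)
    (h3 : a1 ^ 2 + c * conj a0 ^ 2 = a1 ^ 2 + d * conj a0 ^ 2) : c = d := by
  by_cases h : a0 = 0
  · have h' : a1 ≠ 0 := fun h' => ha ⟨h, h'⟩
    have : conj a1 ^ 2 ≠ 0 := by simpa using h'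
    exact mul_right_cancel₀ this (add_left_cancel h1)
  · have : conj a0 ^ 2 ≠ 0 := by simpa using h
    exact mul_right_cancel₀ this (add_left_cancel h3)

/-- First component of the nonsingular pairing. -/
noncomputable def w1 (a0 a1 b0 b1 : ℂ) : ℂ := conj a0 * b0 + conj a1 * b1
/-- Second component of the nonsingular pairing. -/
noncomputable def w2 (a0 a1 b0 b1 : ℂ) : ℂ := a0 * b1 - a1 * b0

theorem w_norm (a0 a1 b0 b1 : ℂ) : ‖w1 a0 a1 b0 b1‖ ^ 2 + ‖w2 a0 a1 b0 b1‖ ^ 2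
    = (‖a0‖ ^ 2 + ‖a1‖ ^ 2) * (‖b0‖ ^ 2 + ‖b1‖ ^ 2) := by
  have : ((‖w1 a0 a1 b0 b1‖ ^ 2 + ‖w2 a0 a1 b0 b1‖ ^ 2 : ℝ) : ℂ)
    = (((‖a0‖ ^ 2 + ‖a1‖ ^ 2) * (‖b0‖ ^ 2 + ‖b1‖ ^ 2) : ℝ) : ℂ) := by
    rw [Complex.ofReal_mul, ← nn_eq, ← nn_eq, ← nn_eq]
    simp [w1, w2]; ring
  exact_mod_cast this

theorem w_lt {a0 a1 b0 b1 : ℂ} (h : ‖a0‖ ^ 2 + ‖a1‖ ^ 2 + (‖b0‖ ^ 2 + ‖b1‖ ^ 2) = 1) :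
    ‖w1 a0 a1 b0 b1‖ < 1 ∧ ‖w2 a0 a1 b0 b1‖ < 1 := by
  have := w_norm a0 a1 b0 b1
  set N : ℝ := ‖a0‖ ^ 2 + ‖a1‖ ^ 2 with hN
  set M : ℝ := ‖b0‖ ^ 2 + ‖b1‖ ^ 2 with hM
  have : N * M ≤ 1 / 4 := by nlinarith [sq_nonneg (N - M)]
  constructor
  · by_contra hh
    nlinarith [sq_nonneg ‖w2 a0 a1 b0 b1‖]
  · by_contra hh
    nlinarith [sq_nonneg ‖w1 a0 a1 b0 b1‖]

/-- The three coordinates of the perturbed Veronese map. -/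
noncomputable def P1 (a0 a1 c : ℂ) : ℂ := a0 ^ 2 + c * conj a1 ^ 2
/-- Off-diagonal coordinate. -/
noncomputable def P2 (a0 a1 c : ℂ) : ℂ := a0 * a1 - c * (conj a0 * conj a1)
/-- Last coordinate. -/
noncomputable def P3 (a0 a1 c : ℂ) : ℂ := a1 ^ 2 + c * conj a0 ^ 2

theorem core {a0 a1 b0 b1 p0 p1 q0 q1 : ℂ} {l : ℝ} (hl : 0 < l)
    (hx : ‖a0‖ ^ 2 + ‖a1‖ ^ 2 + (‖b0‖ ^ 2 + ‖b1‖ ^ 2) = 1)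
    (hy : ‖p0‖ ^ 2 + ‖p1‖ ^ 2 + (‖q0‖ ^ 2 + ‖q1‖ ^ 2) = 1)
    (h1 : P1 a0 a1 (w1 a0 a1 b0 b1) = l * P1 p0 p1 (w1 p0 p1 q0 q1))
    (h2 : P2 a0 a1 (w1 a0 a1 b0 b1) = l * P2 p0 p1 (w1 p0 p1 q0 q1))
    (h3 : P3 a0 a1 (w1 a0 a1 b0 b1) = l * P3 p0 p1 (w1 p0 p1 q0 q1))
    (k1 : P1 b0 b1 (w2 a0 a1 b0 b1) = l * P1 q0 q1 (w2 p0 p1 q0 q1))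
    (k2 : P2 b0 b1 (w2 a0 a1 b0 b1) = l * P2 q0 q1 (w2 p0 p1 q0 q1))
    (k3 : P3 b0 b1 (w2 a0 a1 b0 b1) = l * P3 q0 q1 (w2 p0 p1 q0 q1)) :
    (a0 = p0 ∧ a1 = p1 ∧ b0 = q0 ∧ b1 = q1) ∨
    (a0 = -p0 ∧ a1 = -p1 ∧ b0 = -q0 ∧ b1 = -q1) := by
  obtain ⟨r, hr, rfl⟩ : ∃ r : ℝ, 0 < r ∧ l = r ^ 2 :=
    ⟨Real.sqrt l, Real.sqrt_pos.mpr hl, (Real.sq_sqrt hl.le).symm⟩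
  have ha := takagi a0 a1 (r * p0) (r * p1) _ _ (w_lt hx).1 (w_lt hy).1
    (by simp only [P1] at h1; rw [h1]; simp; ring) (by simp only [P2] at h2; rw [h2]; simp; ring)
    (by simp only [P3] at h3; rw [h3]; simp; ring)
  have hb := takagi b0 b1 (r * q0) (r * q1) _ _ (w_lt hx).2 (w_lt hy).2
    (by simp only [P1] at k1; rw [k1]; simp; ring) (by simp only [P2] at k2; rw [k2]; simp; ring)
    (by simp only [P3] at k3; rw [k3]; simp; ring)
  have na : ‖a0‖ ^ 2 + ‖a1‖ ^ 2 = r ^ 2 * (‖p0‖ ^ 2 + ‖p1‖ ^ 2) := by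
    rcases ha with ⟨e, f⟩ | ⟨e, f⟩ <;> rw [e, f] <;> simp [mul_pow] <;> ring
  have nb : ‖b0‖ ^ 2 + ‖b1‖ ^ 2 = r ^ 2 * (‖q0‖ ^ 2 + ‖q1‖ ^ 2) := by
    rcases hb with ⟨e, f⟩ | ⟨e, f⟩ <;> rw [e, f] <;> simp [mul_pow] <;> ring
  have r1 : r = 1 := by
    have : r ^ 2 = 1 := by
      rw [na, nb, ← mul_add, hy] at hx; linarith
    nlinarith
  subst r1
  simp only [Complex.ofReal_one, one_mul, one_pow] at ha hb h1 h3 k1 k3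
  by_cases za : p0 = 0 ∧ p1 = 0
  · obtain ⟨rfl, rfl⟩ := za
    simp only [neg_zero, or_self] at ha
    rcases hb with hb | hb
    · exact Or.inl ⟨ha.1, ha.2, hb⟩
    · exact Or.inr ⟨by simp [ha.1], by simp [ha.2], hb⟩
  by_cases zb : q0 = 0 ∧ q1 = 0
  · obtain ⟨rfl, rfl⟩ := zb
    simp only [neg_zero, or_self] at hb
    rcases ha with ha | ha
    · exact Or.inl ⟨ha.1, ha.2, hb⟩
    · exact Or.inr ⟨ha.1, ha.2, by simp [hb.1], by simp [hb.2]⟩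
  have key : w1 a0 a1 b0 b1 = w1 p0 p1 q0 q1 ∧ w2 a0 a1 b0 b1 = w2 p0 p1 q0 q1 := by
    constructor
    · apply takagi_coeff za
      · rcases ha with ⟨e, f⟩ | ⟨e, f⟩ <;> simpa [P1, e, f] using h1
      · rcases ha with ⟨e, f⟩ | ⟨e, f⟩ <;> simpa [P3, e, f] using h3
    · apply takagi_coeff zb
      · rcases hb with ⟨e, f⟩ | ⟨e, f⟩ <;> simpa [P1, e, f] using k1
      · rcases hb with ⟨e, f⟩ | ⟨e, f⟩ <;> simpa [P3, e, f] using k3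
  have bad : ¬ (w1 p0 p1 q0 q1 = 0 ∧ w2 p0 p1 q0 q1 = 0) := by
    rintro ⟨e, f⟩
    have := w_norm p0 p1 q0 q1
    rw [e, f] at this
    simp at this
    rcases this with h | h
    · exact za (nn_zero h)
    · exact zb (nn_zero h)
  have flip1 : w1 a0 a1 b0 b1 = - w1 p0 p1 q0 q1 → w2 a0 a1 b0 b1 = - w2 p0 p1 q0 q1 → False := by
    intro e f
    rw [key.1] at e
    rw [key.2] at f
    exact bad ⟨self_eq_neg.mp e, self_eq_neg.mp f⟩
  rcases ha with ⟨rfl, rfl⟩ | ⟨rfl, rfl⟩ <;> rcases hb with ⟨rfl, rfl⟩ | ⟨rfl, rfl⟩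
  · simp
  · exact (flip1 (by simp [w1]; ring) (by simp [w2]; ring)).elim
  · exact (flip1 (by simp [w1]; ring) (by simp [w2]; ring)).elim
  · simp

/-- Points of `ℝ⁸` read as four complex numbers. -/
noncomputable def cx (x : EuclideanSpace ℝ (Fin 8)) (i j : Fin 8) : ℂ := (x i : ℂ) + (x j : ℂ) * I

theorem cx_norm (x : EuclideanSpace ℝ (Fin 8)) (i j : Fin 8) :
    ‖cx x i j‖ ^ 2 = x i ^ 2 + x j ^ 2 := by
  rw [← Complex.normSq_eq_norm_sq, cx, Complex.normSq_add_mul_I]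

theorem cx_neg (x : EuclideanSpace ℝ (Fin 8)) (i j : Fin 8) : cx (-x) i j = - cx x i j := by
  simp [cx]; ring

theorem cx_inj {x y : EuclideanSpace ℝ (Fin 8)} {i j : Fin 8} (h : cx x i j = cx y i j) :
    x i = y i ∧ x j = y j := by
  have h1 := congrArg Complex.re h
  have h2 := congrArg Complex.im h
  simpa [cx] using And.intro h1 h2

theorem cx_all {x y : EuclideanSpace ℝ (Fin 8)} (h0 : cx x 0 1 = cx y 0 1)
    (h1 : cx x 2 3 = cx y 2 3) (h2 : cx x 4 5 = cx y 4 5) (h3 : cx x 6 7 = cx y 6 7) : x = y := by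
  ext i
  fin_cases i
  · exact (cx_inj h0).1
  · exact (cx_inj h0).2
  · exact (cx_inj h1).1
  · exact (cx_inj h1).2
  · exact (cx_inj h2).1
  · exact (cx_inj h2).2
  · exact (cx_inj h3).1
  · exact (cx_inj h3).2

theorem cx_sphere (x : EuclideanSpace ℝ (Fin 8)) (h : ‖x‖ = 1) :
    ‖cx x 0 1‖ ^ 2 + ‖cx x 2 3‖ ^ 2 + (‖cx x 4 5‖ ^ 2 + ‖cx x 6 7‖ ^ 2) = 1 := by
  have := EuclideanSpace.norm_sq_eq x
  rw [h] at this
  simp only [Fin.sum_univ_eight, Real.norm_eq_abs, sq_abs] at this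
  simp only [cx_norm]
  linarith

/-- Coefficient at `a`. -/
noncomputable def c1 (x : EuclideanSpace ℝ (Fin 8)) : ℂ :=
  w1 (cx x 0 1) (cx x 2 3) (cx x 4 5) (cx x 6 7)
/-- Coefficient at `b`. -/
noncomputable def c2 (x : EuclideanSpace ℝ (Fin 8)) : ℂ :=
  w2 (cx x 0 1) (cx x 2 3) (cx x 4 5) (cx x 6 7)

/-- The six complex coordinates of the map to `ℝ¹²`. -/
noncomputable def G6 (x : EuclideanSpace ℝ (Fin 8)) : Fin 6 → ℂ :=
  ![P1 (cx x 0 1) (cx x 2 3) (c1 x), P2 (cx x 0 1) (cx x 2 3) (c1 x),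
    P3 (cx x 0 1) (cx x 2 3) (c1 x), P1 (cx x 4 5) (cx x 6 7) (c2 x),
    P2 (cx x 4 5) (cx x 6 7) (c2 x), P3 (cx x 4 5) (cx x 6 7) (c2 x)]

/-- The map to `ℝ¹²`. -/
noncomputable def G (x : EuclideanSpace ℝ (Fin 8)) : EuclideanSpace ℝ (Fin 12) :=
  !₂[(G6 x 0).re, (G6 x 0).im, (G6 x 1).re, (G6 x 1).im, (G6 x 2).re, (G6 x 2).im,
    (G6 x 3).re, (G6 x 3).im, (G6 x 4).re, (G6 x 4).im, (G6 x 5).re, (G6 x 5).im]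

theorem cx_cont (i j : Fin 8) : Continuous (fun x => cx x i j) := by
  unfold cx; fun_prop

theorem G6_cont (k : Fin 6) : Continuous (fun x => G6 x k) := by
  have h0 := cx_cont 0 1
  have h1 := cx_cont 2 3
  have h2 := cx_cont 4 5
  have h3 := cx_cont 6 7
  have hc := Complex.continuous_conj
  fin_cases k <;> simp [G6, P1, P2, P3, c1, c2, w1, w2] <;> fun_prop

theorem G_cont : Continuous G := by
  have hr : ∀ k, Continuous fun x => (G6 x k).re := fun k =>
    Complex.continuous_re.comp (G6_cont k)
  have hi : ∀ k, Continuous fun x => (G6 x k).im := fun k =>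
    Complex.continuous_im.comp (G6_cont k)
  unfold G
  apply (PiLp.continuous_toLp 2 _).comp
  apply continuous_pi
  intro i
  fin_cases i <;> first | exact hr _ | exact hi _

theorem G6_neg (x : EuclideanSpace ℝ (Fin 8)) : G6 (-x) = G6 x := by
  funext k
  fin_cases k <;> simp [G6, P1, P2, P3, c1, c2, w1, w2, cx_neg]

theorem G_neg (x : EuclideanSpace ℝ (Fin 8)) : G (-x) = G x := by
  simp [G, G6_neg]

theorem G_smul {x y : EuclideanSpace ℝ (Fin 8)} {l : ℝ} (h : G x = l • G y) (k : Fin 6) :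
    G6 x k = l * G6 y k := by
  have e : ∀ i, G x i = l * G y i := fun i => by rw [h]; simp
  apply Complex.ext
  · fin_cases k
    · simpa [G] using e 0
    · simpa [G] using e 2
    · simpa [G] using e 4
    · simpa [G] using e 6
    · simpa [G] using e 8
    · simpa [G] using e 10
  · fin_cases k
    · simpa [G] using e 1
    · simpa [G] using e 3
    · simpa [G] using e 5
    · simpa [G] using e 7
    · simpa [G] using e 9
    · simpa [G] using e 11

theorem G_inj {x y : EuclideanSpace ℝ (Fin 8)} {l : ℝ} (hl : 0 < l) (hx : ‖x‖ = 1) (hy : ‖y‖ = 1)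
    (h : G x = l • G y) : x = y ∨ x = -y := by
  have e := G_smul h
  have := core hl (cx_sphere x hx) (cx_sphere y hy) (e 0) (e 1) (e 2) (e 3) (e 4) (e 5)
  rcases this with ⟨h0, h1, h2, h3⟩ | ⟨h0, h1, h2, h3⟩
  · exact Or.inl (cx_all h0 h1 h2 h3)
  · right
    apply cx_all <;> rw [cx_neg] <;> assumption

theorem P_zero {a0 a1 c : ℂ} (hc : ‖c‖ < 1) (h1 : P1 a0 a1 c = 0) (h2 : P2 a0 a1 c = 0)
    (h3 : P3 a0 a1 c = 0) : a0 = 0 ∧ a1 = 0 := by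
  have := takagi a0 a1 0 0 c 0 hc (by simp) (by simpa [P1] using h1) (by simpa [P2] using h2)
    (by simpa [P3] using h3)
  simpa using this

/-- The image misses the ray through the third basis vector, and `0`. -/
theorem G_miss {x : EuclideanSpace ℝ (Fin 8)} (hx : ‖x‖ = 1) (l : ℝ) :
    G x ≠ l • EuclideanSpace.single (2 : Fin 12) (1 : ℝ) := by
  intro h
  have e : ∀ i, i ≠ 2 → G x i = 0 := fun i hi => by rw [h]; simp [hi]
  have hs := cx_sphere x hx
  have g0 : G6 x 0 = 0 := Complex.ext (by simpa [G] using e 0) (by simpa [G] using e 1)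
  have g2 : G6 x 2 = 0 := Complex.ext (by simpa [G] using e 4) (by simpa [G] using e 5)
  have g3 : G6 x 3 = 0 := Complex.ext (by simpa [G] using e 6) (by simpa [G] using e 7)
  have g4 : G6 x 4 = 0 := Complex.ext (by simpa [G] using e 8) (by simpa [G] using e 9)
  have g5 : G6 x 5 = 0 := Complex.ext (by simpa [G] using e 10) (by simpa [G] using e 11)
  obtain ⟨b0, b1⟩ := P_zero (w_lt hs).2 g3 g4 g5
  simp [G6, P1, P3, c1, w1, b0, b1] at g0 g2
  simp [g0, g2, b0, b1] at hs

instance fact12 : Fact (Module.finrank ℝ (EuclideanSpace ℝ (Fin 12)) = 11 + 1) := ⟨by simp⟩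

theorem G_ne {x : EuclideanSpace ℝ (Fin 8)} (hx : ‖x‖ = 1) : G x ≠ 0 := by
  simpa using G_miss hx 0

/-- The normalized map to `S¹¹`. -/
noncomputable def GS (x : sphere (0 : EuclideanSpace ℝ (Fin 8)) 1) :
    sphere (0 : EuclideanSpace ℝ (Fin 12)) 1 :=
  ⟨‖G x‖⁻¹ • G x, by
    have := G_ne (norm_eq_of_mem_sphere x)
    simp [norm_smul, this]⟩

/-- The missed point. -/
noncomputable def pole : sphere (0 : EuclideanSpace ℝ (Fin 12)) 1 :=
  ⟨EuclideanSpace.single (2 : Fin 12) (1 : ℝ), by simp⟩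

theorem GS_cont : Continuous GS := by
  have h : Continuous fun x : sphere (0 : EuclideanSpace ℝ (Fin 8)) 1 => G x :=
    G_cont.comp continuous_subtype_val
  refine Continuous.subtype_mk ?_ _
  exact (h.norm.inv₀ fun x => norm_ne_zero_iff.mpr (G_ne (norm_eq_of_mem_sphere x))).smul h

theorem GS_neg (x : sphere (0 : EuclideanSpace ℝ (Fin 8)) 1) : GS (-x) = GS x := by
  apply Subtype.ext
  simp [GS, G_neg]

theorem GS_inj {x y : sphere (0 : EuclideanSpace ℝ (Fin 8)) 1} (h : GS x = GS y) :
    x = y ∨ x = -y := by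
  have hx := norm_eq_of_mem_sphere x
  have hy := norm_eq_of_mem_sphere y
  have px := norm_pos_iff.mpr (G_ne hx)
  have py := norm_pos_iff.mpr (G_ne hy)
  have h' : ‖G x‖⁻¹ • G x = ‖G y‖⁻¹ • G y := congrArg Subtype.val h
  have : G x = (‖G x‖ * ‖G y‖⁻¹) • G y := by
    rw [mul_smul, ← h', smul_smul, mul_inv_cancel₀ px.ne', one_smul]
  rcases G_inj (by positivity) hx hy this with e | e
  · exact Or.inl (Subtype.ext e)
  · exact Or.inr (Subtype.ext e)

theorem GS_miss (x : sphere (0 : EuclideanSpace ℝ (Fin 8)) 1) : GS x ≠ pole := by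
  intro h
  have hx := norm_eq_of_mem_sphere x
  have px := norm_pos_iff.mpr (G_ne hx)
  have h' : ‖G x‖⁻¹ • G x = EuclideanSpace.single (2 : Fin 12) (1 : ℝ) := congrArg Subtype.val h
  apply G_miss hx ‖G x‖
  rw [← h', smul_smul, mul_inv_cancel₀ px.ne', one_smul]

/-- `ℝP⁷`, the quotient of `S⁷` by the antipodal involution, embeds topologically in `ℝ¹¹`. -/
theorem rp7_topologically_embeds_in_R11 :
    ∃ g : sphere (0 : EuclideanSpace ℝ (Fin 8)) 1 → EuclideanSpace ℝ (Fin 11),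
      Continuous g ∧
      (∀ x : sphere (0 : EuclideanSpace ℝ (Fin 8)) 1, g (-x) = g x) ∧
      ∃ h : ∀ a b : sphere (0 : EuclideanSpace ℝ (Fin 8)) 1,
          antipodalSetoid.r a b → g a = g b,
        Topology.IsEmbedding (Quotient.lift (s := antipodalSetoid) g h) := by
  have hsrc : ∀ x, GS x ∈ (stereographic' 11 pole).source := fun x => by
    rw [stereographic'_source]; exact GS_miss x
  have hcont : Continuous fun x => stereographic' 11 pole (GS x) :=
    (stereographic' 11 pole).continuousOn.comp_continuous GS_cont hsrc
  have hneg : ∀ x, stereographic' 11 pole (GS (-x)) = stereographic' 11 pole (GS x) := fun x => by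
    rw [GS_neg]
  have hrel : ∀ a b : sphere (0 : EuclideanSpace ℝ (Fin 8)) 1,
      antipodalSetoid.r a b → stereographic' 11 pole (GS a) = stereographic' 11 pole (GS b) := by
    rintro a b (rfl | rfl)
    · rfl
    · exact hneg b
  refine ⟨fun x => stereographic' 11 pole (GS x), hcont, hneg, hrel, ?_⟩
  have : CompactSpace (Quotient antipodalSetoid) := Quotient.compactSpace
  refine (Topology.IsClosedEmbedding.of_continuous_injective_isClosedMap
    (hcont.quotient_lift hrel) ?_ (hcont.quotient_lift hrel).isClosedMap).isEmbedding
  rintro ⟨x⟩ ⟨y⟩ hxy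
  exact Quotient.sound (s := antipodalSetoid)
    (GS_inj ((stereographic' 11 pole).injOn (hsrc x) (hsrc y) hxy))
end
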